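/- arXiv:2601.16676 — 4 statements merged into one kernel-verified Lean document; each statement's English description precedes it below -/
import Mathlib

section
/- Let m, r, d be integers with m > 2, d ≥ 1, and 2 ≤ 2r ≤ m−1. Then the closure of the set A(⌈d/2⌉, …, ⌈d/2⌉) (with ⌈d/2⌉ repeated r times), with respect to coefficientwise convergence, equals the set of all m×m skew-symmetric matrix polynomials over ℂ of grade d with normal rank at most 2r. -/
open Polynomial Matrix

/-- The normal rank of a matrix polynomial: its rank as a matrix over the field of
rational functions ℂ(λ). -/
noncomputable def normalRank {m n : ℕ} (P : Matrix (Fin m) (Fin n) (Polynomial ℂ)) : ℕ :=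
  (P.map (algebraMap (Polynomial ℂ) (RatFunc ℂ))).rank

/-- The degree of the `j`-th column of a matrix polynomial: the maximum of the degrees
of its entries. -/
noncomputable def colDegree {m k : ℕ} (L : Matrix (Fin m) (Fin k) (Polynomial ℂ))
    (j : Fin k) : ℕ :=
  Finset.univ.sup fun i => (L i j).natDegree

/-- The 2r×2r matrix `J₂ᵣ = [[0, Δᵣ], [−Δᵣ, 0]]`, where `Δᵣ` is the r×r anti-identity. -/
noncomputable def Jmat (r : ℕ) : Matrix (Fin (2 * r)) (Fin (2 * r)) (Polynomial ℂ) :=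
  Matrix.of fun i j =>
    if (i : ℕ) + (j : ℕ) + 1 = 2 * r ∧ (i : ℕ) < r then 1
    else if (i : ℕ) + (j : ℕ) + 1 = 2 * r ∧ (j : ℕ) < r then -1
    else 0

/-- The set `A(d₁, …, d_r)`: m×m matrix polynomials of the form `L J₂ᵣ Lᵀ`, where the
`i`-th column of `L` has degree exactly `dᵢ` and the `(2r−i+1)`-th column has degree
exactly `d − dᵢ`, for `i = 1, …, r`. -/
noncomputable def Aset (m r d : ℕ) (ds : Fin r → ℕ) :
    Set (Matrix (Fin m) (Fin m) (Polynomial ℂ)) :=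
  {P | ∃ L : Matrix (Fin m) (Fin (2 * r)) (Polynomial ℂ),
    (∀ i : Fin r,
      colDegree L (Fin.castLE (by omega) i) = ds i ∧
      colDegree L (Fin.castLE (by omega) i).rev = d - ds i) ∧
    P = L * Jmat r * Lᵀ}

/-- The tuple of coefficient matrices of a matrix polynomial of grade `d`. -/
noncomputable def coeffTuple (m d : ℕ) (P : Matrix (Fin m) (Fin m) (Polynomial ℂ)) :
    Fin (d + 1) → Matrix (Fin m) (Fin m) ℂ :=
  fun i => Matrix.of fun a b => (P a b).coeff (i : ℕ)


section BasisPart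

noncomputable def vdeg {m : ℕ} (y : Fin m → ℂ[X]) : ℕ := Finset.univ.sup fun l => (y l).natDegree

lemma natDegree_le_vdeg {m : ℕ} (y : Fin m → ℂ[X]) (l : Fin m) : (y l).natDegree ≤ vdeg y :=
  Finset.le_sup (f := fun l => (y l).natDegree) (Finset.mem_univ l)

lemma exists_vdeg {m : ℕ} (y : Fin m → ℂ[X]) (hy : y ≠ 0) :
    ∃ l, y l ≠ 0 ∧ vdeg y ≤ (y l).natDegree := by
  obtain ⟨l0, hl0⟩ := Function.ne_iff.1 hy
  obtain ⟨l, -, hl⟩ := Finset.exists_mem_eq_sup Finset.univ ⟨l0, Finset.mem_univ _⟩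
    (fun l => (y l).natDegree)
  change vdeg y = _ at hl
  by_cases h : y l = 0
  · refine ⟨l0, hl0, ?_⟩
    rw [hl, h]; simp
  · exact ⟨l, h, hl.le⟩

lemma LI_update {m k : ℕ} (x : Fin k → Fin m → ℂ[X]) (hx : LinearIndependent ℂ[X] x)
    (y : Fin m → ℂ[X]) (p : ℂ[X]) (hp : p ≠ 0) (c : Fin k → ℂ[X])
    (h : p • y = ∑ i, c i • x i) (j : Fin k) (hj : c j ≠ 0) :
    LinearIndependent ℂ[X] (Function.update x j y) := by
  rw [Fintype.linearIndependent_iff] at hx ⊢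
  intro g hg
  have h1 : ∑ i, (if i = j then g j * c j else p * g i + g j * c i) • x i = 0 := by
    have h2 : p • ∑ i, g i • Function.update x j y i = 0 := by rw [hg, smul_zero]
    rw [← h2, Finset.smul_sum, ← Finset.add_sum_erase _ _ (Finset.mem_univ j),
      ← Finset.add_sum_erase Finset.univ (fun i => p • g i • Function.update x j y i)
        (Finset.mem_univ j)]
    simp only [Function.update_self, if_true]
    rw [smul_comm p (g j) y, h, ← Finset.add_sum_erase _ _ (Finset.mem_univ j), smul_add,
      Finset.smul_sum, add_assoc, ← Finset.sum_add_distrib, smul_smul]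
    congr 1
    apply Finset.sum_congr rfl
    intro i hi
    have hij := Finset.ne_of_mem_erase hi
    rw [if_neg hij, Function.update_of_ne hij, smul_smul, smul_smul, ← add_smul, add_comm]
  have h3 := hx _ h1
  have hgj : g j = 0 := by
    have := h3 j
    simpa [hj] using this
  intro i
  by_cases hij : i = j
  · rw [hij, hgj]
  · have := h3 i
    simpa [hij, hgj, hp] using this

lemma min_basis {m k : ℕ} (N : Submodule ℂ[X] (Fin m → ℂ[X]))
    (hsat : ∀ (p : ℂ[X]) y, p ≠ 0 → p • y ∈ N → y ∈ N)
    (hex : ∃ x : Fin k → Fin m → ℂ[X], (∀ i, x i ∈ N) ∧ LinearIndependent ℂ[X] x)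
    (hspan : ∀ x : Fin k → Fin m → ℂ[X], (∀ i, x i ∈ N) → LinearIndependent ℂ[X] x →
      ∀ y ∈ N, ∃ p : ℂ[X], p ≠ 0 ∧ ∃ c : Fin k → ℂ[X], p • y = ∑ i, c i • x i) :
    ∃ (x : Fin k → Fin m → ℂ[X]) (a : Fin k → ℕ), (∀ i, x i ∈ N) ∧ LinearIndependent ℂ[X] x ∧
      (∀ i l, (x i l).natDegree ≤ a i) ∧
      ∀ D : ℕ, ∀ y ∈ N, (∀ l, (y l).natDegree ≤ D) →
        ∃ q : Fin k → ℂ[X], y = ∑ i, q i • x i ∧ ∀ i, q i ≠ 0 → (q i).natDegree + a i ≤ D := by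
  classical
  have hne : ∃ n : ℕ, ∃ x : Fin k → Fin m → ℂ[X], (∀ i, x i ∈ N) ∧ LinearIndependent ℂ[X] x ∧
      ∑ i, vdeg (x i) = n := by
    obtain ⟨x, h1, h2⟩ := hex
    exact ⟨_, x, h1, h2, rfl⟩
  obtain ⟨x, hxN, hx, hsum⟩ := Nat.find_spec hne
  have hmin0 : ∀ x' : Fin k → Fin m → ℂ[X], (∀ i, x' i ∈ N) → LinearIndependent ℂ[X] x' →
      ∑ i, vdeg (x i) ≤ ∑ i, vdeg (x' i) := by
    intro x' h1 h2
    rw [hsum]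
    exact Nat.find_min' hne ⟨x', h1, h2, rfl⟩
  clear hsum
  have hmin : ∀ y : Fin m → ℂ[X], ∀ (p : ℂ[X]) (c : Fin k → ℂ[X]) (j : Fin k), p ≠ 0 →
      p • y = ∑ i, c i • x i → c j ≠ 0 → ∃ l, y l ≠ 0 ∧ vdeg (x j) ≤ (y l).natDegree := by
    intro y p c j hp h hj
    have hyN : y ∈ N := by
      apply hsat p y hp
      rw [h]
      exact Submodule.sum_mem _ fun i _ => Submodule.smul_mem _ _ (hxN i)
    have hy : y ≠ 0 := by
      rintro rfl
      rw [smul_zero] at h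
      exact hj (Fintype.linearIndependent_iff.1 hx c h.symm j)
    obtain ⟨l, hl, hl2⟩ := exists_vdeg y hy
    refine ⟨l, hl, le_trans ?_ hl2⟩
    have h5 := hmin0 (Function.update x j y) (by
      intro i
      by_cases hij : i = j
      · subst hij; simpa using hyN
      · rw [Function.update_of_ne hij]; exact hxN i) (LI_update x hx y p hp c h j hj)
    rw [← Finset.add_sum_erase _ _ (Finset.mem_univ j),
      ← Finset.add_sum_erase Finset.univ (fun i => vdeg (Function.update x j y i))
        (Finset.mem_univ j)] at h5
    rw [Function.update_self] at h5
    have h6 : ∑ i ∈ Finset.univ.erase j, vdeg (Function.update x j y i) =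
        ∑ i ∈ Finset.univ.erase j, vdeg (x i) := by
      apply Finset.sum_congr rfl
      intro i hi
      rw [Function.update_of_ne (Finset.ne_of_mem_erase hi)]
    omega
  have hargmax : ∀ β : Fin k → ℂ, β ≠ 0 → ∃ j, β j ≠ 0 ∧ ∀ i, β i ≠ 0 →
      vdeg (x i) ≤ vdeg (x j) := by
    intro β hβ
    obtain ⟨j0, hj0⟩ := Function.ne_iff.1 hβ
    obtain ⟨j, hj, hj2⟩ := Finset.exists_max_image (Finset.univ.filter fun i => β i ≠ 0)
      (fun i => vdeg (x i)) ⟨j0, by simpa using hj0⟩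
    refine ⟨j, by simpa using hj, fun i hi => hj2 i (by simpa using hi)⟩
  have hfin : ∀ (α : ℂ) (β : Fin k → ℂ), (∀ l, ∑ i, β i * (x i l).eval α = 0) → β = 0 := by
    intro α β h
    by_contra hβ
    obtain ⟨j, hj, hj2⟩ := hargmax β hβ
    set s : Fin m → ℂ[X] := ∑ i, C (β i) • x i with hs
    have hsl : ∀ l, s l = ∑ i, C (β i) * x i l := by
      intro l; simp [hs, Finset.sum_apply]
    have hroot : ∀ l, (X - C α) * (s l /ₘ (X - C α)) = s l := by
      intro l
      rw [mul_divByMonic_eq_iff_isRoot, IsRoot, hsl, eval_finsetSum]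
      simpa using h l
    obtain ⟨l, hl, hl2⟩ := hmin (fun l => s l /ₘ (X - C α)) (X - C α) (fun i => C (β i)) j
      (X_sub_C_ne_zero α) (by
        rw [← hs]; funext l; exact hroot l) (by simpa using hj)
    have h1 : (s l).natDegree = 1 + (s l /ₘ (X - C α)).natDegree := by
      conv_lhs => rw [← hroot l]
      rw [natDegree_mul (X_sub_C_ne_zero α) hl, natDegree_X_sub_C]
    have h2 : (s l).natDegree ≤ vdeg (x j) := by
      rw [hsl]
      apply natDegree_sum_le_of_forall_le
      intro i _
      by_cases hi : β i = 0
      · simp [hi]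
      · exact (natDegree_C_mul_le _ _).trans ((natDegree_le_vdeg _ l).trans (hj2 i hi))
    omega
  have hinf : ∀ β : Fin k → ℂ, (∀ l, ∑ i, β i * (x i l).coeff (vdeg (x i)) = 0) → β = 0 := by
    intro β h
    by_contra hβ
    obtain ⟨j, hj, hj2⟩ := hargmax β hβ
    set s : Fin m → ℂ[X] := ∑ i, (C (β i) * X ^ (vdeg (x j) - vdeg (x i))) • x i with hs
    have hsl : ∀ l, s l = ∑ i, C (β i) * X ^ (vdeg (x j) - vdeg (x i)) * x i l := by
      intro l; simp [hs, Finset.sum_apply]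
    obtain ⟨l, hl, hl2⟩ := hmin s 1 (fun i => C (β i) * X ^ (vdeg (x j) - vdeg (x i))) j
      one_ne_zero (by rw [one_smul]) (by simpa using hj)
    have h2 : (s l).natDegree ≤ vdeg (x j) := by
      rw [hsl]
      apply natDegree_sum_le_of_forall_le
      intro i _
      by_cases hi : β i = 0
      · simp [hi]
      · refine natDegree_mul_le.trans ?_
        have h3 := natDegree_C_mul_X_pow_le (β i) (vdeg (x j) - vdeg (x i))
        have h4 := natDegree_le_vdeg (x i) l
        have h5 := hj2 i hi
        omega
    have h3 : (s l).coeff (vdeg (x j)) = 0 := by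
      rw [hsl, finsetSum_coeff, ← h l]
      apply Finset.sum_congr rfl
      intro i _
      by_cases hi : β i = 0
      · simp [hi]
      · have h5 := hj2 i hi
        rw [mul_assoc, coeff_C_mul, coeff_X_pow_mul', if_pos (by omega)]
        congr 2; omega
    have h4 : (s l).natDegree = vdeg (x j) := le_antisymm h2 hl2
    rw [← h4] at h3
    exact hl (leadingCoeff_eq_zero.1 h3)
  refine ⟨x, fun i => vdeg (x i), hxN, hx, fun i l => natDegree_le_vdeg _ l, ?_⟩
  have hbasis : ∀ n : ℕ, ∀ (p : ℂ[X]) (y : Fin m → ℂ[X]) (c : Fin k → ℂ[X]), p ≠ 0 →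
      p.natDegree = n → p • y = ∑ i, c i • x i → ∃ q : Fin k → ℂ[X], y = ∑ i, q i • x i := by
    intro n
    induction n with
    | zero =>
      intro p y c hp hn h
      rw [natDegree_eq_zero] at hn
      obtain ⟨b, rfl⟩ := hn
      have hb : b ≠ 0 := by rintro rfl; simp at hp
      refine ⟨fun i => C b⁻¹ * c i, ?_⟩
      simp_rw [mul_smul]
      rw [← Finset.smul_sum, ← h, smul_smul, ← C_mul, inv_mul_cancel₀ hb, C_1, one_smul]
    | succ n ih =>
      intro p y c hp hn h
      obtain ⟨α, hα⟩ := IsAlgClosed.exists_root p (by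
        intro h0
        have := natDegree_eq_zero_iff_degree_le_zero.2 h0.le
        omega)
      have h0 : (fun i => (c i).eval α) = 0 := by
        apply hfin α
        intro l
        have := congrArg (eval α) (congrFun h l)
        simp only [Pi.smul_apply, smul_eq_mul, eval_mul, Finset.sum_apply, eval_finsetSum] at this
        rw [← this, hα.eq_zero, zero_mul]
      have hc : ∀ i, (X - C α) * (c i /ₘ (X - C α)) = c i := fun i =>
        mul_divByMonic_eq_iff_isRoot.2 (congrFun h0 i)
      have hp' : (X - C α) * (p /ₘ (X - C α)) = p := mul_divByMonic_eq_iff_isRoot.2 hα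
      have hp0 : p /ₘ (X - C α) ≠ 0 := by
        intro h1; rw [h1, mul_zero] at hp'; exact hp hp'.symm
      apply ih (p /ₘ (X - C α)) y (fun i => c i /ₘ (X - C α)) hp0
      · have := congrArg natDegree hp'
        rw [natDegree_mul (X_sub_C_ne_zero α) hp0, natDegree_X_sub_C] at this
        omega
      · have h1 : (X - C α) • ((p /ₘ (X - C α)) • y) =
            (X - C α) • ∑ i, (c i /ₘ (X - C α)) • x i := by
          rw [smul_smul, hp', h, Finset.smul_sum]
          apply Finset.sum_congr rfl
          intro i _
          rw [smul_smul, hc]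
        exact smul_right_injective _ (X_sub_C_ne_zero α) h1
  intro D y hy hyD
  obtain ⟨p, hp, c, h⟩ := hspan x hxN hx y hy
  obtain ⟨q, hq⟩ := hbasis _ p y c hp rfl h
  refine ⟨q, hq, ?_⟩
  by_contra hcon
  push Not at hcon
  obtain ⟨i0, hi0, hi0'⟩ := hcon
  obtain ⟨j, hj, hj2⟩ := Finset.exists_max_image (Finset.univ.filter fun i => q i ≠ 0)
      (fun i => (q i).natDegree + vdeg (x i)) ⟨i0, by simpa using hi0⟩
  simp only [Finset.mem_filter, Finset.mem_univ, true_and] at hj hj2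
  set E := (q j).natDegree + vdeg (x j) with hE
  have hED : D < E := lt_of_lt_of_le hi0' (hj2 i0 hi0)
  have h0 : (fun i => if vdeg (x i) ≤ E then (q i).coeff (E - vdeg (x i)) else 0) = 0 := by
    apply hinf
    intro l
    have h1 : (y l).coeff E = 0 := coeff_eq_zero_of_natDegree_lt ((hyD l).trans_lt hED)
    refine Eq.trans ?_ h1
    rw [hq, Finset.sum_apply, finsetSum_coeff]
    apply Finset.sum_congr rfl
    intro i _
    by_cases hi : q i = 0
    · simp [hi]
    · have h2 := hj2 i hi
      rw [if_pos (by omega), Pi.smul_apply, smul_eq_mul,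
        ← coeff_mul_add_eq_of_natDegree_le (by omega) (natDegree_le_vdeg (x i) l)]
      congr 1; omega
  have h3 := congrFun h0 j
  simp only [Pi.zero_apply] at h3
  rw [if_pos (by omega), hE, Nat.add_sub_cancel] at h3
  exact hj (leadingCoeff_eq_zero.1 h3)

end BasisPart

section FactorPart

lemma skew_factor {m d k : ℕ} (P : Matrix (Fin m) (Fin m) ℂ[X]) (hP : Pᵀ = -P)
    (hd : ∀ i j, (P i j).natDegree ≤ d) (hk : normalRank P = k) :
    ∃ (x : Fin k → Fin m → ℂ[X]) (a : Fin k → ℕ) (Q : Matrix (Fin k) (Fin k) ℂ[X]),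
      (∀ i l, (x i l).natDegree ≤ a i) ∧ Qᵀ = -Q ∧
      (∀ s t, P s t = ∑ i, ∑ j, Q i j * x i s * x j t) ∧
      ∀ i j, Q i j ≠ 0 → (Q i j).natDegree + a i + a j ≤ d := by
  classical
  let K := RatFunc ℂ
  have hPst : ∀ s t, P s t = -P t s := by
    intro s t
    have := congrFun (congrFun hP t) s
    simpa using this
  let ι : (Fin m → ℂ[X]) →ₗ[ℂ[X]] (Fin m → K) := LinearMap.compLeft (Algebra.linearMap ℂ[X] K) (Fin m)
  have hιa : ∀ y l, ι y l = algebraMap ℂ[X] K (y l) := fun y l => rfl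
  have hιinj : Function.Injective ι := by
    intro y z h
    funext l
    exact IsFractionRing.injective ℂ[X] K (congrFun h l)
  have hιs : ∀ (p : ℂ[X]) y, ι (p • y) = algebraMap ℂ[X] K p • ι y := by
    intro p y
    rw [map_smul, algebraMap_smul]
  let PK := P.map (algebraMap ℂ[X] K)
  let V : Submodule K (Fin m → K) := Submodule.span K (Set.range PK.col)
  have hVk : Module.finrank K V = k := by
    rw [← hk]; exact (Matrix.rank_eq_finrank_span_cols PK).symm
  let N : Submodule ℂ[X] (Fin m → ℂ[X]) := (V.restrictScalars ℂ[X]).comap ι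
  have hN : ∀ y, y ∈ N ↔ ι y ∈ V := fun y => Iff.rfl
  have hcol : ∀ t, (fun s => P s t) ∈ N := by
    intro t
    rw [hN]
    exact Submodule.subset_span ⟨t, rfl⟩
  have hLI : ∀ x : Fin k → Fin m → ℂ[X], LinearIndependent ℂ[X] x →
      LinearIndependent K (fun i => ι (x i)) := by
    intro x hx
    rw [← LinearIndependent.iff_fractionRing (R := ℂ[X])]
    exact hx.map' ι (LinearMap.ker_eq_bot.2 hιinj)
  obtain ⟨x, a, hxN, hx, hxa, hpred⟩ := min_basis (k := k) N
    (by
      intro p y hp h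
      rw [hN, hιs] at h
      rw [hN]
      have hp' : algebraMap ℂ[X] K p ≠ 0 := by
        intro h0
        exact hp (IsFractionRing.injective ℂ[X] K (h0.trans (map_zero _).symm))
      exact (V.smul_mem_iff hp').1 h)
    (by
      obtain ⟨f, hf1, hf2, hf3⟩ := Submodule.exists_fun_fin_finrank_span_eq K (Set.range PK.col)
      change Module.finrank K (Submodule.span K (Set.range PK.col)) = k at hVk
      generalize Module.finrank K (Submodule.span K (Set.range PK.col)) = k' at f hf1 hf2 hf3 hVk
      subst hVk
      choose g hg using hf1
      refine ⟨fun i s => P s (g i), fun i => hcol _, ?_⟩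
      apply LinearIndependent.of_comp ι
      rw [LinearIndependent.iff_fractionRing (R := ℂ[X]) (K := K)]
      have hff : f = ⇑ι ∘ fun i s => P s (g i) := by
        funext i
        rw [← hg i]
        rfl
      rw [hff] at hf3
      exact hf3)
    (by
      intro x hxN hx y hy
      have hxK := hLI x hx
      have hsp : Submodule.span K (Set.range fun i => ι (x i)) = V := by
        apply Submodule.eq_of_le_of_finrank_eq
        · rw [Submodule.span_le]
          rintro _ ⟨i, rfl⟩
          exact hxN i
        · rw [finrank_span_eq_card hxK, hVk, Fintype.card_fin]
      have hy' : ι y ∈ V := hy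
      rw [← hsp, Submodule.mem_span_range_iff_exists_fun] at hy'
      obtain ⟨c, hc⟩ := hy'
      obtain ⟨b, hb⟩ := IsLocalization.exist_integer_multiples_of_finite (nonZeroDivisors ℂ[X]) c
      choose e he using hb
      refine ⟨b, nonZeroDivisors.ne_zero b.2, e, hιinj ?_⟩
      rw [hιs, ← hc, map_sum, Finset.smul_sum]
      apply Finset.sum_congr rfl
      intro i _
      rw [hιs, he i, smul_smul, Algebra.smul_def (b : ℂ[X]) (c i)])
  have hxK := hLI x hx
  obtain ⟨g, hg⟩ := LinearMap.exists_leftInverse_of_injective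
    (Fintype.linearCombination K (fun i => ι (x i)))
    (LinearMap.ker_eq_bot.2 (linearIndependent_iff_injective_fintypeLinearCombination.1 hxK))
  have hpc := fun t => hpred d (fun s => P s t) (hcol t) (fun s => hd s t)
  choose C hC1 hC2 using hpc
  -- rows of C lie in N
  have hrow : ∀ i, (fun t => C t i) ∈ N := by
    intro i
    rw [hN]
    have h1 : ι (fun t => C t i) = - ∑ s, (g (Pi.single s 1) i) • PK.col s := by
      funext t
      rw [hιa]
      have h2 : ι (fun s => P s t) = Fintype.linearCombination K (fun i => ι (x i))
          (fun i => algebraMap ℂ[X] K (C t i)) := by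
        rw [hC1, map_sum, Fintype.linearCombination_apply]
        exact Finset.sum_congr rfl fun i _ => hιs _ _
      have h3 : g (ι (fun s => P s t)) = fun i => algebraMap ℂ[X] K (C t i) := by
        rw [h2]; exact LinearMap.congr_fun hg _
      have h4 := congrFun h3 i
      rw [← h4, LinearMap.pi_apply_eq_sum_univ g]
      simp only [Finset.sum_apply, Pi.smul_apply, Pi.neg_apply, smul_eq_mul]
      rw [← Finset.sum_neg_distrib]
      apply Finset.sum_congr rfl
      intro s _
      have h5 : PK.col s t = - ι (fun s => P s t) s := by
        change algebraMap ℂ[X] K (P t s) = - algebraMap ℂ[X] K (P s t)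
        rw [hPst s t, map_neg, neg_neg]
      rw [h5]
      have h6 : (fun j : Fin m => if s = j then (1:K) else 0) = Pi.single s 1 := by
        funext j
        simp [Pi.single_apply, eq_comm]
      rw [h6]; ring
    rw [h1]
    exact V.neg_mem (V.sum_mem fun s _ => V.smul_mem _ (Submodule.subset_span ⟨s, rfl⟩))
  have hpr := fun i => hpred (d - a i) (fun t => C t i) (hrow i) (by
    intro t
    by_cases h : C t i = 0
    · simp [h]
    · have := hC2 t i h
      change (C t i).natDegree ≤ _
      omega)
  choose Q hQ1 hQ2 using hpr
  have hxind := Fintype.linearIndependent_iff.1 hx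
  have hPQ : ∀ s t, P s t = ∑ i, ∑ j, Q i j * x i s * x j t := by
    intro s t
    have h1 := congrFun (hC1 t) s
    simp only [Finset.sum_apply, Pi.smul_apply, smul_eq_mul] at h1
    rw [h1]
    apply Finset.sum_congr rfl
    intro i _
    have h2 := congrFun (hQ1 i) t
    simp only [Finset.sum_apply, Pi.smul_apply, smul_eq_mul] at h2
    rw [h2, Finset.sum_mul]
    apply Finset.sum_congr rfl
    intro j _
    ring
  refine ⟨x, a, Matrix.of Q, hxa, ?_, hPQ, ?_⟩
  · have h1 : ∀ s t, ∑ i, (∑ j, (Q i j + Q j i) * x j t) * x i s = 0 := by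
      intro s t
      have h2 : P s t + P t s = 0 := by rw [hPst s t]; ring
      rw [hPQ s t, hPQ t s, Finset.sum_comm (s := Finset.univ) (t := Finset.univ)
        (f := fun i j => Q i j * x i t * x j s), ← Finset.sum_add_distrib] at h2
      rw [← h2]
      apply Finset.sum_congr rfl
      intro i _
      rw [Finset.sum_mul, ← Finset.sum_add_distrib]
      apply Finset.sum_congr rfl
      intro j _
      ring
    have h2 : ∀ t i, ∑ j, (Q i j + Q j i) * x j t = 0 := by
      intro t
      apply hxind
      funext s
      simpa [Finset.sum_apply] using h1 s t
    have h3 : ∀ i j, Q i j + Q j i = 0 := by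
      intro i
      apply hxind
      funext t
      simpa [Finset.sum_apply] using h2 t i
    ext1 i j
    simp only [Matrix.transpose_apply, Matrix.of_apply, Matrix.neg_apply]
    linear_combination h3 j i
  · intro i j hij
    have h1 := hQ2 i j hij
    have h2 : ∃ t, C t i ≠ 0 := by
      by_contra hcon
      push Not at hcon
      have h3 : ∑ j, Q i j • x j = 0 := by
        rw [← hQ1 i]; funext t; exact hcon t
      exact hij (hxind _ h3 j)
    obtain ⟨t, ht⟩ := h2
    have h3 := hC2 t i ht
    simp only [Matrix.of_apply]
    omega

lemma rank_lt_of_det_eq_zero {n : ℕ} {K : Type*} [Field K] (A : Matrix (Fin n) (Fin n) K)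
    (h : A.det = 0) : A.rank < n := by
  obtain ⟨v, hv, hv2⟩ := Matrix.exists_mulVec_eq_zero_iff.2 h
  have h1 := LinearMap.finrank_range_add_finrank_ker A.mulVecLin
  have h2 : 0 < Module.finrank K (LinearMap.ker A.mulVecLin) := by
    rw [Module.finrank_pos_iff_exists_ne_zero]
    exact ⟨⟨v, by simpa using hv2⟩, fun h0 => hv (congrArg Subtype.val h0)⟩
  rw [Module.finrank_fin_fun] at h1
  unfold Matrix.rank
  omega

lemma det_skew_odd {n : ℕ} (hn : Odd n) (Q : Matrix (Fin n) (Fin n) ℂ[X]) (hQ : Qᵀ = -Q) :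
    Q.det = 0 := by
  have h1 : Q.det = -Q.det := by
    conv_lhs => rw [← Matrix.det_transpose, hQ, Matrix.det_neg, Fintype.card_fin, hn.neg_one_pow]
    ring
  have h2 : (2 : ℂ[X]) * Q.det = 0 := by linear_combination h1
  rcases mul_eq_zero.1 h2 with h | h
  · exact absurd h two_ne_zero
  · exact h

lemma decompose {m d : ℕ} (r : ℕ) : ∀ P : Matrix (Fin m) (Fin m) ℂ[X], Pᵀ = -P →
    (∀ i j, (P i j).natDegree ≤ d) → normalRank P ≤ 2 * r →
    ∃ (u v : Fin r → Fin m → ℂ[X]) (a : Fin r → ℕ), (∀ i, a i ≤ d) ∧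
      (∀ i l, (u i l).natDegree ≤ a i) ∧ (∀ i l, (v i l).natDegree ≤ d - a i) ∧
      ∀ s t, P s t = ∑ i, (u i s * v i t - v i s * u i t) := by
  induction r with
  | zero =>
    intro P hP hd hr
    obtain ⟨x, a, Q, -, -, hPQ, -⟩ := skew_factor P hP hd (k := 0) (by omega)
    refine ⟨0, 0, 0, by simp, by simp, by simp, ?_⟩
    intro s t
    rw [hPQ]; simp
  | succ r ih =>
    intro P hP hd hr
    have key : ∃ (u v : Fin m → ℂ[X]) (a : ℕ) (P' : Matrix (Fin m) (Fin m) ℂ[X]),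
        a ≤ d ∧ (∀ l, (u l).natDegree ≤ a) ∧ (∀ l, (v l).natDegree ≤ d - a) ∧
        (∀ s t, P s t = (u s * v t - v s * u t) + P' s t) ∧ normalRank P' ≤ 2 * r := by
      obtain ⟨k, hk⟩ : ∃ k, normalRank P = k := ⟨_, rfl⟩
      obtain ⟨x, a, Q, hxa, hQ, hPQ, hQd⟩ := skew_factor P hP hd hk
      cases k with
      | zero => exact ⟨0, 0, 0, P, by simp, by simp, by simp, by simp, by omega⟩
      | succ k =>
        have hQst : ∀ i j, Q i j = - Q j i := by
          intro i j
          have := congrFun (congrFun hQ j) i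
          simpa using this
        have hQ00 : Q 0 0 = 0 := by
          have h1 : (2 : ℂ[X]) * Q 0 0 = 0 := by linear_combination hQst 0 0
          exact (mul_eq_zero.1 h1).resolve_left two_ne_zero
        let Q' : Matrix (Fin k) (Fin k) ℂ[X] := Q.submatrix Fin.succ Fin.succ
        let M : Matrix (Fin m) (Fin k) ℂ[X] := Matrix.of fun s i => x i.succ s
        let v : Fin m → ℂ[X] := fun t => ∑ j : Fin k, Q 0 j.succ * x j.succ t
        have hdec : ∀ s t, P s t = (x 0 s * v t - v s * x 0 t) + (M * Q' * Mᵀ) s t := by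
          intro s t
          have h1 : (M * Q' * Mᵀ) s t = ∑ i : Fin k, ∑ j : Fin k,
              Q i.succ j.succ * x i.succ s * x j.succ t := by
            simp only [Matrix.mul_apply, Matrix.transpose_apply, M, Q', Matrix.of_apply,
              Matrix.submatrix_apply, Finset.sum_mul]
            rw [Finset.sum_comm]
            refine Finset.sum_congr rfl fun i _ => Finset.sum_congr rfl fun j _ => ?_
            ring
          rw [h1, hPQ, Fin.sum_univ_succ, Fin.sum_univ_succ, hQ00]
          simp only [Fin.sum_univ_succ, Finset.sum_add_distrib, v, Finset.mul_sum, Finset.sum_mul]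
          have h2 : ∑ i : Fin k, Q i.succ 0 * x i.succ s * x 0 t =
              - ∑ i : Fin k, Q 0 i.succ * x i.succ s * x 0 t := by
            rw [← Finset.sum_neg_distrib]
            refine Finset.sum_congr rfl fun i _ => ?_
            rw [hQst i.succ 0]; ring
          have h3 : ∑ i : Fin k, Q 0 i.succ * x 0 s * x i.succ t =
              ∑ i : Fin k, x 0 s * (Q 0 i.succ * x i.succ t) :=
            Finset.sum_congr rfl fun i _ => by ring
          rw [h2, h3]; ring
        have hrank : normalRank (M * Q' * Mᵀ) ≤ 2 * r := by
          unfold normalRank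
          rw [Matrix.map_mul, Matrix.map_mul]
          refine (Matrix.rank_mul_le_left _ _).trans ((Matrix.rank_mul_le_right _ _).trans ?_)
          by_cases hkr : k ≤ 2 * r
          · exact (Matrix.rank_le_height _).trans hkr
          · have hk2 : k = 2 * r + 1 := by omega
            have h0 : Q'.det = 0 := det_skew_odd ⟨r, hk2⟩ Q' (by
              ext1 i j
              simp only [Matrix.transpose_apply, Matrix.neg_apply, Q', Matrix.submatrix_apply]
              exact hQst _ _)
            have h1 := rank_lt_of_det_eq_zero (Q'.map (algebraMap ℂ[X] (RatFunc ℂ))) (by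
              have h2 := RingHom.map_det (algebraMap ℂ[X] (RatFunc ℂ)) Q'
              rw [h0, map_zero] at h2
              exact h2.symm)
            omega
        by_cases hv : v = 0
        · refine ⟨0, 0, 0, M * Q' * Mᵀ, by simp, by simp, by simp, ?_, hrank⟩
          intro s t
          rw [hdec, hv]; simp
        · have h1 : ∃ j : Fin k, Q 0 j.succ ≠ 0 := by
            by_contra hcon
            push Not at hcon
            apply hv
            funext t
            simp [v, hcon]
          obtain ⟨j, hj⟩ := h1
          have h2 := hQd _ _ hj
          refine ⟨x 0, v, a 0, M * Q' * Mᵀ, by omega, hxa 0, ?_, hdec, hrank⟩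
          intro t
          apply natDegree_sum_le_of_forall_le
          intro i _
          by_cases hi : Q 0 i.succ = 0
          · simp [hi]
          · have h3 := hQd _ _ hi
            have h4 := hxa i.succ t
            refine natDegree_mul_le.trans ?_
            omega
    obtain ⟨u, v, a, P', had, hu, hv, hdec, hrank⟩ := key
    have hPst : ∀ s t, P s t = -P t s := by
      intro s t
      have := congrFun (congrFun hP t) s
      simpa using this
    obtain ⟨us, vs, as, h1, h2, h3, h4⟩ := ih P' (by
      ext1 s t
      simp only [Matrix.transpose_apply, Matrix.neg_apply]
      linear_combination hPst t s - hdec t s - hdec s t) (by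
      intro s t
      have h : P' s t = P s t - (u s * v t - v s * u t) := by rw [hdec s t]; ring
      rw [h]
      have hb : ∀ s t, (u s * v t).natDegree ≤ d := fun s t => natDegree_mul_le.trans (by
        have := hu s; have := hv t; omega)
      refine (natDegree_sub_le _ _).trans (max_le (hd s t)
        ((natDegree_sub_le _ _).trans (max_le (hb s t) ?_)))
      rw [mul_comm]; exact hb t s) hrank
    refine ⟨Fin.cons u us, Fin.cons v vs, Fin.cons a as, ?_, ?_, ?_, ?_⟩
    · intro i; refine Fin.cases ?_ ?_ i <;> simp [had, h1]
    · intro i l; revert l; refine Fin.cases ?_ ?_ i <;> simp [hu, h2]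
    · intro i l; revert l; refine Fin.cases ?_ ?_ i <;> simp [hv, h3]
    · intro s t
      rw [hdec, h4, Fin.sum_univ_succ]
      simp

end FactorPart

section ClosurePart

open Filter Topology

noncomputable def wedge {m : ℕ} (u v : Fin m → ℂ[X]) : Matrix (Fin m) (Fin m) ℂ[X] :=
  Matrix.of fun s t => u s * v t - v s * u t

lemma coeffTuple_wedge_left {m d : ℕ} (u v w : Fin m → ℂ[X]) (ε : ℂ) :
    coeffTuple m d (wedge (fun s => u s + C ε * w s) v) =
      coeffTuple m d (wedge u v) + ε • coeffTuple m d (wedge w v) := by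
  funext i
  ext s t
  have h : (u s + C ε * w s) * v t - v s * (u t + C ε * w t) =
    (u s * v t - v s * u t) + C ε * (w s * v t - v s * w t) := by ring
  change ((u s + C ε * w s) * v t - v s * (u t + C ε * w t)).coeff (i : ℕ) =
    (u s * v t - v s * u t).coeff (i : ℕ) + ε * (w s * v t - v s * w t).coeff (i : ℕ)
  rw [h, coeff_add, coeff_C_mul]

lemma wedge_swap {m : ℕ} (u v : Fin m → ℂ[X]) : wedge u v = wedge (fun s => - v s) u := by
  ext1 s t
  simp only [wedge, Matrix.of_apply]
  ring

lemma mem_closure_of_perturb {m d : ℕ} (A B : Fin (d + 1) → Matrix (Fin m) (Fin m) ℂ)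
    (S : Set (Fin (d + 1) → Matrix (Fin m) (Fin m) ℂ))
    (h : ∀ᶠ ε : ℂ in 𝓝[≠] 0, A + ε • B ∈ S) : A ∈ closure S := by
  refine mem_closure_of_tendsto (f := fun ε : ℂ => A + ε • B) (b := 𝓝[≠] (0 : ℂ)) ?_ h
  have hc : Continuous (fun ε : ℂ => A + ε • B) := by fun_prop
  have := hc.tendsto 0
  simp only [zero_smul, add_zero] at this
  exact this.mono_left nhdsWithin_le_nhds

def Dset (m d a b : ℕ) : Set (Fin (d + 1) → Matrix (Fin m) (Fin m) ℂ) :=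
  {T | ∃ u v : Fin m → ℂ[X], (∀ l, (u l).natDegree ≤ a) ∧ (∀ l, (v l).natDegree ≤ b) ∧
    T = coeffTuple m d (wedge u v)}

lemma Dset_swap (m d a b : ℕ) : Dset m d a b ⊆ Dset m d b a := by
  rintro _ ⟨u, v, hu, hv, rfl⟩
  exact ⟨fun s => - v s, u, fun l => by simpa using hv l, hu, by rw [wedge_swap]⟩

lemma Dset_step (m d a b : ℕ) (hab : a ≤ b) :
    Dset m d a (b + 1) ⊆ closure (Dset m d (a + 1) b) := by
  rintro _ ⟨u, v, hu, hv, rfl⟩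
  let w : Fin m → ℂ[X] := fun s => X ^ (a + 1) * C ((v s).coeff (b + 1))
  apply mem_closure_of_perturb _ (coeffTuple m d (wedge w v))
  filter_upwards [self_mem_nhdsWithin] with ε hε
  have hε : ε ≠ 0 := hε
  rw [← coeffTuple_wedge_left]
  refine ⟨fun s => u s + C ε * w s,
    fun s => v s - C ε⁻¹ * X ^ (b - a) * (u s + C ε * w s), ?_, ?_, ?_⟩
  · intro l
    refine (natDegree_add_le _ _).trans (max_le ((hu l).trans (by omega)) ?_)
    refine (natDegree_C_mul_le _ _).trans (natDegree_mul_le.trans ?_)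
    rw [natDegree_X_pow, natDegree_C]
  · intro l
    have h1 : v l - C ε⁻¹ * X ^ (b - a) * (u l + C ε * w l) =
        (v l - C ((v l).coeff (b + 1)) * X ^ (b + 1)) - C ε⁻¹ * (X ^ (b - a) * u l) := by
      have h2 : (C ε⁻¹ * C ε : ℂ[X]) = 1 := by rw [← C_mul, inv_mul_cancel₀ hε, C_1]
      have h3 : (X : ℂ[X]) ^ (b + 1) = X ^ (b - a) * X ^ (a + 1) := by
        rw [← pow_add]; congr 1; omega
      rw [h3]
      simp only [w]
      linear_combination (- (X ^ (b - a) * X ^ (a + 1) * C ((v l).coeff (b + 1)))) * h2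
    change (v l - C ε⁻¹ * X ^ (b - a) * (u l + C ε * w l)).natDegree ≤ b
    rw [h1]
    refine (natDegree_sub_le _ _).trans (max_le ?_ ?_)
    · rw [natDegree_le_iff_coeff_eq_zero]
      intro n hn
      rw [coeff_sub, coeff_C_mul_X_pow]
      split_ifs with h
      · rw [h, sub_self]
      · rw [coeff_eq_zero_of_natDegree_lt ((hv l).trans_lt (by omega)), sub_zero]
    · refine (natDegree_C_mul_le _ _).trans (natDegree_mul_le.trans ?_)
      rw [natDegree_X_pow]
      have := hu l
      omega
  · congr 1
    ext1 s t
    simp only [wedge, Matrix.of_apply]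
    ring

lemma Dset_balance (m d e : ℕ) (he : e = (d + 1) / 2) (n : ℕ) : ∀ a, a + n = e →
    Dset m d a (d - a) ⊆ closure (Dset m d e (d - e)) := by
  induction n with
  | zero =>
    intro a ha
    have : a = e := by omega
    subst this
    exact subset_closure
  | succ n ih =>
    intro a ha
    have h1 := Dset_step m d a (d - (a + 1)) (by omega)
    have h2 : d - (a + 1) + 1 = d - a := by omega
    rw [h2] at h1
    exact h1.trans (closure_minimal (ih (a + 1) (by omega)) isClosed_closure)

lemma Dset_all (m d a : ℕ) (ha : a ≤ d) :
    Dset m d a (d - a) ⊆ closure (Dset m d ((d + 1) / 2) (d - (d + 1) / 2)) := by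
  by_cases h : a ≤ (d + 1) / 2
  · exact Dset_balance m d _ rfl ((d + 1) / 2 - a) a (by omega)
  · have h1 := Dset_balance m d _ rfl ((d + 1) / 2 - (d - a)) (d - a) (by omega)
    have h2 : d - (d - a) = a := by omega
    rw [h2] at h1
    exact (Dset_swap m d a (d - a)).trans h1

def Eset (m d a b : ℕ) : Set (Fin (d + 1) → Matrix (Fin m) (Fin m) ℂ) :=
  {T | ∃ u v : Fin m → ℂ[X], vdeg u = a ∧ vdeg v = b ∧ T = coeffTuple m d (wedge u v)}

lemma vdeg_perturb {m : ℕ} (hm : 0 < m) (u : Fin m → ℂ[X]) (a : ℕ)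
    (hu : ∀ l, (u l).natDegree ≤ a) :
    ∀ᶠ ε : ℂ in 𝓝[≠] 0, vdeg (fun s => u s + C ε * X ^ a) = a := by
  let l0 : Fin m := ⟨0, hm⟩
  have h1 : ∀ᶠ ε : ℂ in 𝓝[≠] 0, ε ≠ - (u l0).coeff a := by
    by_cases hc : - (u l0).coeff a = 0
    · rw [hc]; exact self_mem_nhdsWithin
    · exact mem_nhdsWithin_of_mem_nhds (isOpen_ne.mem_nhds (Ne.symm hc))
  filter_upwards [h1] with ε hε
  apply le_antisymm
  · apply Finset.sup_le
    intro l _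
    exact (natDegree_add_le _ _).trans (max_le (hu l) (natDegree_C_mul_X_pow_le _ _))
  · refine le_trans ?_ (natDegree_le_vdeg _ l0)
    apply le_natDegree_of_ne_zero
    rw [coeff_add, coeff_C_mul_X_pow, if_pos rfl]
    intro h0
    exact hε (by linear_combination h0)

lemma Dset_sub_Eset (m d a b : ℕ) (hm : 0 < m) : Dset m d a b ⊆ closure (Eset m d a b) := by
  have h1 : ∀ u v : Fin m → ℂ[X], (∀ l, (u l).natDegree ≤ a) → vdeg v = b →
      coeffTuple m d (wedge u v) ∈ closure (Eset m d a b) := by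
    intro u v hu hv
    apply mem_closure_of_perturb _ (coeffTuple m d (wedge (fun _ => X ^ a) v))
    filter_upwards [vdeg_perturb hm u a hu] with ε hε
    rw [← coeffTuple_wedge_left]
    exact ⟨_, v, hε, hv, rfl⟩
  rintro _ ⟨u, v, hu, hv, rfl⟩
  rw [← closure_closure, wedge_swap]
  apply mem_closure_of_perturb _ (coeffTuple m d (wedge (fun _ => X ^ b) u))
  have hv' : ∀ l, (- v l).natDegree ≤ b := fun l => by simpa using hv l
  filter_upwards [vdeg_perturb hm (fun s => - v s) b hv'] with ε hε
  rw [← coeffTuple_wedge_left, wedge_swap]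
  exact h1 _ _ (by simpa using hu) hε

lemma sum_fin_two_mul {r : ℕ} {M : Type*} [AddCommMonoid M] (f : Fin (2 * r) → M) :
    ∑ k, f k = ∑ i : Fin r, (f (Fin.castLE (by omega) i) + f (Fin.castLE (by omega) i).rev) := by
  have h : r + r = 2 * r := by omega
  rw [← Fin.sum_congr' f h, Fin.sum_univ_add, Finset.sum_add_distrib]
  congr 1
  rw [← Equiv.sum_comp Fin.revPerm]
  refine Finset.sum_congr rfl fun i _ => ?_
  congr 1
  ext
  simp [Fin.val_rev]
  omega

lemma LJL {m r : ℕ} (L : Matrix (Fin m) (Fin (2 * r)) ℂ[X]) (s t : Fin m) :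
    (L * Jmat r * Lᵀ) s t = ∑ i : Fin r,
      (L s (Fin.castLE (by omega) i) * L t (Fin.castLE (by omega) i).rev -
        L s (Fin.castLE (by omega) i).rev * L t (Fin.castLE (by omega) i)) := by
  have h0 : (L * Jmat r * Lᵀ) s t = ∑ k, L s k * ∑ l, Jmat r k l * L t l := by
    simp only [Matrix.mul_apply, Matrix.transpose_apply, Finset.sum_mul, Finset.mul_sum]
    rw [Finset.sum_comm]
    refine Finset.sum_congr rfl fun i _ => Finset.sum_congr rfl fun j _ => ?_
    ring
  rw [h0, sum_fin_two_mul]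
  refine Finset.sum_congr rfl fun i _ => ?_
  have h1 : ∀ l, Jmat r (Fin.castLE (by omega) i) l * L t l =
      if l = (Fin.castLE (by omega : r ≤ 2 * r) i).rev then L t l else 0 := by
    intro l
    have hi := i.2
    have hl := l.2
    simp only [Jmat, Matrix.of_apply, Fin.ext_iff, Fin.val_rev, Fin.val_castLE]
    by_cases h : (l : ℕ) = 2 * r - (i + 1)
    · rw [if_pos ⟨by omega, hi⟩, if_pos h, one_mul]
    · rw [if_neg (by omega), if_neg (by omega), if_neg h, zero_mul]
  have h2 : ∀ l, Jmat r (Fin.castLE (by omega : r ≤ 2 * r) i).rev l * L t l =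
      if l = Fin.castLE (by omega : r ≤ 2 * r) i then - L t l else 0 := by
    intro l
    have hi := i.2
    have hl := l.2
    simp only [Jmat, Matrix.of_apply, Fin.ext_iff, Fin.val_rev, Fin.val_castLE]
    by_cases h : (l : ℕ) = i
    · rw [if_neg (by omega), if_pos (by omega), if_pos h, neg_one_mul]
    · rw [if_neg (by omega), if_neg (by omega), if_neg h, zero_mul]
  simp only [h1, h2, Finset.sum_ite_eq', Finset.mem_univ, if_true]
  ring

lemma mem_Aset {m r d e : ℕ} (u v : Fin r → Fin m → ℂ[X]) (hu : ∀ i, vdeg (u i) = e)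
    (hv : ∀ i, vdeg (v i) = d - e) : ∑ i, wedge (u i) (v i) ∈ Aset m r d fun _ => e := by
  let L : Matrix (Fin m) (Fin (2 * r)) ℂ[X] := Matrix.of fun s k =>
    if h : (k : ℕ) < r then u ⟨k, h⟩ s else v ⟨2 * r - (k + 1), by omega⟩ s
  have hL1 : ∀ (i : Fin r) s, L s (Fin.castLE (by omega) i) = u i s := by
    intro i s
    simp [L]
  have hL2 : ∀ (i : Fin r) s, L s (Fin.castLE (by omega : r ≤ 2 * r) i).rev = v i s := by
    intro i s
    have hi := i.2
    simp only [L, Matrix.of_apply, Fin.val_rev, Fin.val_castLE]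
    rw [dif_neg (by omega)]
    congr 2
    omega
  refine ⟨L, ?_, ?_⟩
  · intro i
    constructor
    · rw [← hu i]
      simp only [colDegree, hL1, vdeg]
    · rw [← hv i]
      simp only [colDegree, hL2, vdeg]
  · ext1 s t
    rw [LJL]
    simp only [hL1, hL2, Matrix.sum_apply, wedge, Matrix.of_apply]

lemma coeffTuple_sum {m d r : ℕ} (A : Fin r → Matrix (Fin m) (Fin m) ℂ[X]) :
    coeffTuple m d (∑ i, A i) = ∑ i, coeffTuple m d (A i) := by
  funext j
  ext s t
  simp [coeffTuple, Matrix.sum_apply, finsetSum_coeff]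

lemma closure_superset {m r d : ℕ} (hm : 0 < m) (P : Matrix (Fin m) (Fin m) ℂ[X])
    (hP : Pᵀ = -P) (hd : ∀ i j, (P i j).natDegree ≤ d) (hr : normalRank P ≤ 2 * r) :
    coeffTuple m d P ∈ closure (coeffTuple m d '' Aset m r d fun _ => (d + 1) / 2) := by
  obtain ⟨u, v, a, ha, hu, hv, hPuv⟩ := decompose r P hP hd hr
  have h1 : P = ∑ i, wedge (u i) (v i) := by
    ext1 s t
    rw [hPuv]; simp [Matrix.sum_apply, wedge]
  rw [h1, coeffTuple_sum]
  set E := Eset m d ((d + 1) / 2) (d - (d + 1) / 2) with hE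
  have h2 : ∀ i, coeffTuple m d (wedge (u i) (v i)) ∈ closure E := by
    intro i
    have h3 := Dset_all m d (a i) (ha i) ⟨u i, v i, hu i, hv i, rfl⟩
    exact closure_minimal (Dset_sub_Eset m d _ _ hm) isClosed_closure h3
  have h3 : (fun i => coeffTuple m d (wedge (u i) (v i))) ∈
      closure (Set.pi Set.univ fun _ : Fin r => E) := by
    rw [closure_pi_set]
    intro i _
    exact h2 i
  have hc : Continuous (fun T : Fin r → (Fin (d + 1) → Matrix (Fin m) (Fin m) ℂ) => ∑ i, T i) := by
    fun_prop
  have h4 := image_closure_subset_closure_image hc ⟨_, h3, rfl⟩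
  refine closure_mono ?_ h4
  rintro _ ⟨T, hT, rfl⟩
  have hT' : ∀ i, T i ∈ E := fun i => hT i trivial
  choose u' v' hu' hv' hT'' using hT'
  refine ⟨_, mem_Aset u' v' hu' hv', ?_⟩
  rw [coeffTuple_sum]
  exact Finset.sum_congr rfl fun i _ => (hT'' i).symm

lemma exists_LI_rows {K : Type*} [Field K] {m n k : ℕ} (A : Matrix (Fin m) (Fin n) K)
    (h : k ≤ A.rank) : ∃ f : Fin k → Fin m, LinearIndependent K (A.submatrix f id).row := by
  rw [Matrix.rank_eq_finrank_span_row] at h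
  obtain ⟨f, hf1, hf2, hf3⟩ := Submodule.exists_fun_fin_finrank_span_eq K (Set.range A.row)
  choose g hg using hf1
  refine ⟨fun i => g (Fin.castLE h i), ?_⟩
  have h1 : (A.submatrix (fun i => g (Fin.castLE h i)) id).row = f ∘ Fin.castLE h := by
    funext i
    simp only [Function.comp]
    rw [← hg]
    rfl
  rw [h1]
  exact hf3.comp _ (Fin.castLE_injective h)

lemma exists_minor {K : Type*} [Field K] {m n k : ℕ} (A : Matrix (Fin m) (Fin n) K)
    (h : k ≤ A.rank) : ∃ (f : Fin k → Fin m) (g : Fin k → Fin n), (A.submatrix f g).det ≠ 0 := by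
  obtain ⟨f, hf⟩ := exists_LI_rows A h
  have h1 : k ≤ (A.submatrix f id)ᵀ.rank := by
    rw [Matrix.rank_transpose, hf.rank_matrix, Fintype.card_fin]
  obtain ⟨g, hg⟩ := exists_LI_rows _ h1
  refine ⟨f, g, ?_⟩
  rw [Matrix.linearIndependent_rows_iff_isUnit, Matrix.isUnit_iff_isUnit_det] at hg
  have h2 : ((A.submatrix f id)ᵀ.submatrix g id) = (A.submatrix f g)ᵀ := rfl
  rw [h2, Matrix.det_transpose] at hg
  exact hg.ne_zero

noncomputable def polyOf {m d : ℕ} (T : Fin (d + 1) → Matrix (Fin m) (Fin m) ℂ) :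
    Matrix (Fin m) (Fin m) ℂ[X] :=
  Matrix.of fun s t => ∑ i : Fin (d + 1), C (T i s t) * X ^ (i : ℕ)

lemma coeffTuple_polyOf {m d : ℕ} (T : Fin (d + 1) → Matrix (Fin m) (Fin m) ℂ) :
    coeffTuple m d (polyOf T) = T := by
  funext j
  ext s t
  simp only [coeffTuple, polyOf, Matrix.of_apply, finsetSum_coeff, coeff_C_mul_X_pow, Fin.val_inj]
  simp

lemma polyOf_coeffTuple {m d : ℕ} (P : Matrix (Fin m) (Fin m) ℂ[X])
    (hd : ∀ i j, (P i j).natDegree ≤ d) : polyOf (coeffTuple m d P) = P := by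
  ext1 s t
  simp only [coeffTuple, polyOf, Matrix.of_apply]
  rw [Fin.sum_univ_eq_sum_range (fun i => C ((P s t).coeff i) * X ^ i) (d + 1)]
  exact ((P s t).as_sum_range_C_mul_X_pow' (Nat.lt_succ_of_le (hd s t))).symm

lemma closure_subset_aux {m r d e : ℕ} (he : e ≤ d) :
    closure (coeffTuple m d '' Aset m r d fun _ => e) ⊆
      coeffTuple m d '' {P : Matrix (Fin m) (Fin m) (Polynomial ℂ) |
        Pᵀ = -P ∧ (∀ i j, (P i j).natDegree ≤ d) ∧ normalRank P ≤ 2 * r} := by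
  let S : Set (Fin (d + 1) → Matrix (Fin m) (Fin m) ℂ) :=
    {T | (∀ i s t, T i s t + T i t s = 0) ∧ ∀ (f g : Fin (2 * r + 1) → Fin m) (z : ℂ),
      (((polyOf T).map (evalRingHom z)).submatrix f g).det = 0}
  have hclosed : IsClosed S := by
    have hev : ∀ (z : ℂ) (s t : Fin m), Continuous
        (fun T : Fin (d + 1) → Matrix (Fin m) (Fin m) ℂ => (polyOf T).map (evalRingHom z) s t) := by
      intro z s t
      simp only [polyOf, Matrix.map_apply, Matrix.of_apply, coe_evalRingHom, eval_finsetSum,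
        eval_mul, eval_C, eval_pow, eval_X]
      fun_prop
    simp only [S, Set.setOf_and, Set.setOf_forall]
    refine IsClosed.inter ?_ ?_
    · refine isClosed_iInter fun i => isClosed_iInter fun s => isClosed_iInter fun t => ?_
      exact isClosed_eq (by fun_prop) continuous_const
    · refine isClosed_iInter fun f => isClosed_iInter fun g => isClosed_iInter fun z => ?_
      refine isClosed_eq (Continuous.matrix_det ?_) continuous_const
      exact continuous_pi fun i => continuous_pi fun j => hev z (f i) (g j)
  have hsub : (coeffTuple m d '' Aset m r d fun _ => e) ⊆ S := by
    rintro _ ⟨P, ⟨L, hL, rfl⟩, rfl⟩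
    have hc : ∀ (k : Fin (2 * r)) s, (L s k).natDegree ≤ colDegree L k := fun k s =>
      Finset.le_sup (f := fun s => (L s k).natDegree) (Finset.mem_univ s)
    have hb : ∀ (i : Fin r) s t, (L s (Fin.castLE (by omega) i) *
        L t (Fin.castLE (by omega : r ≤ 2 * r) i).rev).natDegree ≤ d := by
      intro i s t
      refine natDegree_mul_le.trans ?_
      have h1 := hc (Fin.castLE (by omega) i) s
      have h2 := hc (Fin.castLE (by omega : r ≤ 2 * r) i).rev t
      rw [(hL i).1] at h1
      rw [(hL i).2] at h2
      beta_reduce at h1 h2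
      omega
    have hdeg : ∀ s t, ((L * Jmat r * Lᵀ) s t).natDegree ≤ d := by
      intro s t
      rw [LJL]
      apply natDegree_sum_le_of_forall_le
      intro i _
      refine (natDegree_sub_le _ _).trans (max_le (hb i s t) ?_)
      rw [mul_comm]
      exact hb i t s
    refine ⟨?_, ?_⟩
    · intro i s t
      change ((L * Jmat r * Lᵀ) s t).coeff (i : ℕ) + ((L * Jmat r * Lᵀ) t s).coeff (i : ℕ) = 0
      rw [← coeff_add, LJL, LJL, ← Finset.sum_add_distrib, Finset.sum_eq_zero, coeff_zero]
      intro j _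
      ring
    · intro f g z
      rw [polyOf_coeffTuple _ hdeg]
      by_contra hdet
      have h1 := Matrix.rank_of_det_ne_zero hdet
      rw [Matrix.mul_assoc, Matrix.map_mul, Matrix.submatrix_mul _ _ f id g Function.bijective_id,
        Fintype.card_fin] at h1
      have h2 := (Matrix.rank_mul_le_left ((L.map (evalRingHom z)).submatrix f id)
        (((Jmat r * Lᵀ).map (evalRingHom z)).submatrix id g)).trans (Matrix.rank_le_width _)
      omega
  intro T hT
  have hTS : T ∈ S := closure_minimal hsub hclosed hT
  refine ⟨polyOf T, ⟨?_, ?_, ?_⟩, coeffTuple_polyOf T⟩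
  · ext1 s t
    simp only [polyOf, Matrix.transpose_apply, Matrix.neg_apply, Matrix.of_apply]
    rw [← Finset.sum_neg_distrib]
    refine Finset.sum_congr rfl fun i _ => ?_
    have h1 : T i t s = - T i s t := by linear_combination hTS.1 i s t
    rw [h1, C_neg, neg_mul]
  · intro s t
    simp only [polyOf, Matrix.of_apply]
    apply natDegree_sum_le_of_forall_le
    intro i _
    exact (natDegree_C_mul_X_pow_le _ _).trans (by omega)
  · by_contra hcon
    push Not at hcon
    obtain ⟨f, g, hfg⟩ := exists_minor (k := 2 * r + 1)
      ((polyOf T).map (algebraMap ℂ[X] (RatFunc ℂ))) hcon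
    apply hfg
    have h0 : ((polyOf T).submatrix f g).det = 0 := by
      apply Polynomial.funext
      intro z
      have h1 := RingHom.map_det (evalRingHom z) ((polyOf T).submatrix f g)
      rw [eval_zero]
      exact h1.trans (hTS.2 f g z)
    have h2 := RingHom.map_det (algebraMap ℂ[X] (RatFunc ℂ)) ((polyOf T).submatrix f g)
    rw [h0, map_zero] at h2
    exact h2.symm

end ClosurePart

/-- The closure of `A(⌈d/2⌉, …, ⌈d/2⌉)`, with respect to coefficientwise convergence,
equals the set of all m×m skew-symmetric matrix polynomials of grade `d` with normal
rank at most `2r`. -/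
theorem closure_Aset_ceil_eq_skew_symmetric_bounded_rank (m r d : ℕ)
    (hm : 2 < m) (hd : 1 ≤ d) (h2 : 2 ≤ 2 * r) (hrm : 2 * r ≤ m - 1) :
    closure (coeffTuple m d '' Aset m r d fun _ => (d + 1) / 2) =
      coeffTuple m d '' {P : Matrix (Fin m) (Fin m) (Polynomial ℂ) |
        Pᵀ = -P ∧ (∀ i j, (P i j).natDegree ≤ d) ∧ normalRank P ≤ 2 * r} := by
  apply Set.Subset.antisymm
  · exact closure_subset_aux (by omega)
  · rintro _ ⟨P, ⟨h1, h3, h4⟩, rfl⟩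
    exact closure_superset (by omega) P h1 h3 h4
end

section
/- Let A, B ∈ Matrix (Fin m) (Fin m) ℂ be skew-symmetric matrices (Aᵀ = −A, Bᵀ = −B). Then there exist an invertible matrix S ∈ Matrix (Fin m) (Fin m) ℂ, a finite family of canonical skew-symmetric pencil blocks, each of one of the three forms H_h(μ) (for some μ ∈ ℂ and h ≥ 1), K_k (for some k ≥ 1), or M_k (for some k ≥ 0), and a bijection between Fin m and the disjoint union of the block index sets, such that the congruent pencil Sᵀ A S − λ Sᵀ B S equals (after reindexing by this bijection) the block-diagonal pencil formed by these blocks. Here: H_h(μ) is the 2h×2h pencil [[0, J_h(μ)], [−J_h(μ)ᵀ, 0]] − λ[[0, I_h], [−I_h, 0]], where J_h(μ) is the h×h upper Jordan block with eigenvalue μ; K_k is the 2k×2k pencil [[0, I_k], [−I_k, 0]] − λ[[0, J_k(0)], [−J_k(0)ᵀ, 0]]; and M_k is the (2k+1)×(2k+1) pencil [[0, F_k], [−F_kᵀ, 0]] − λ[[0, G_k], [−G_kᵀ, 0]], where F_k and G_k are the k×(k+1) matrices with ones on the superdiagonal (resp. the main diagonal) and zeros elsewhere. -/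
open Matrix

/-- The h×h upper Jordan block with eigenvalue μ. -/
def jordanBlock (h : ℕ) (μ : ℂ) : Matrix (Fin h) (Fin h) ℂ :=
  Matrix.of fun i j => if j = i then μ else if (j : ℕ) = (i : ℕ) + 1 then 1 else 0

/-- The k×(k+1) matrix `F_k` with ones on the superdiagonal. -/
def Fmat (k : ℕ) : Matrix (Fin k) (Fin (k + 1)) ℂ :=
  Matrix.of fun i j => if (j : ℕ) = (i : ℕ) + 1 then 1 else 0

/-- The k×(k+1) matrix `G_k` with ones on the main diagonal. -/
def Gmat (k : ℕ) : Matrix (Fin k) (Fin (k + 1)) ℂ :=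
  Matrix.of fun i j => if (j : ℕ) = (i : ℕ) then 1 else 0

/-- Canonical blocks for skew-symmetric matrix pencils under congruence:
`H h μ` (finite eigenvalue μ), `K k` (infinite eigenvalue), `M k` (singular blocks). -/
inductive SkewBlock : Type
  | H : ℕ → ℂ → SkewBlock
  | K : ℕ → SkewBlock
  | M : ℕ → SkewBlock

/-- Validity of the block parameters: `h ≥ 1` for `H`, `k ≥ 1` for `K`, `k ≥ 0` for `M`. -/
def SkewBlock.valid : SkewBlock → Prop
  | .H h _ => 1 ≤ h
  | .K k => 1 ≤ k
  | .M _ => True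

/-- The size of a canonical block: `2h` for `H h μ`, `2k` for `K k`, `2k+1` for `M k`. -/
def SkewBlock.size : SkewBlock → ℕ
  | .H h _ => h + h
  | .K k => k + k
  | .M k => k + (k + 1)

/-- The constant (λ⁰) part of a canonical block pencil `X − λ Y`. -/
noncomputable def SkewBlock.matA : (b : SkewBlock) → Matrix (Fin b.size) (Fin b.size) ℂ
  | .H h μ => (Matrix.fromBlocks 0 (jordanBlock h μ) (-(jordanBlock h μ)ᵀ) 0).submatrix
      finSumFinEquiv.symm finSumFinEquiv.symm
  | .K k => (Matrix.fromBlocks 0 (1 : Matrix (Fin k) (Fin k) ℂ) (-1) 0).submatrix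
      finSumFinEquiv.symm finSumFinEquiv.symm
  | .M k => (Matrix.fromBlocks 0 (Fmat k) (-(Fmat k)ᵀ) 0).submatrix
      finSumFinEquiv.symm finSumFinEquiv.symm

/-- The coefficient of λ (with sign convention `X − λ Y`, this is `Y`) of a canonical
block pencil. -/
noncomputable def SkewBlock.matB : (b : SkewBlock) → Matrix (Fin b.size) (Fin b.size) ℂ
  | .H h _ => (Matrix.fromBlocks 0 (1 : Matrix (Fin h) (Fin h) ℂ) (-1) 0).submatrix
      finSumFinEquiv.symm finSumFinEquiv.symm
  | .K k => (Matrix.fromBlocks 0 (jordanBlock k 0) (-(jordanBlock k 0)ᵀ) 0).submatrix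
      finSumFinEquiv.symm finSumFinEquiv.symm
  | .M k => (Matrix.fromBlocks 0 (Gmat k) (-(Gmat k)ᵀ) 0).submatrix
      finSumFinEquiv.symm finSumFinEquiv.symm

section Aux

set_option linter.unusedSectionVars false

variable {V : Type*} [AddCommGroup V] [Module ℂ V]

/-- Duality: solvability of a linear system. -/
lemma aux_solve {Z E : Type*} [AddCommGroup Z] [Module ℂ Z] [AddCommGroup E] [Module ℂ E]
    [FiniteDimensional ℂ E] (L : Z →ₗ[ℂ] Module.Dual ℂ E) (τ : Module.Dual ℂ Z)
    (h : ∀ z, L z = 0 → τ z = 0) : ∃ y : E, ∀ z, L z y = τ z := by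
  have h1 : τ ∈ LinearMap.range L.dualMap := by
    rw [LinearMap.range_dualMap_eq_dualAnnihilator_ker, Submodule.mem_dualAnnihilator]
    intro z hz
    exact h z (by simpa using hz)
  obtain ⟨σ, hσ⟩ := h1
  refine ⟨(Module.evalEquiv ℂ E).symm σ, fun z => ?_⟩
  rw [← hσ]
  simp [LinearMap.dualMap_apply]

lemma aux_hankel (h : ℕ) (f : ℕ → ℕ → ℂ) (hs : ∀ i j, f i j = - f j i)
    (hf : ∀ i j, i + 1 < h → j + 1 < h → f i (j + 1) = f (i + 1) j) :
    ∀ i j, i < h → j < h → f i j = 0 := by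
  have key : ∀ d i j, i + d < h → j + d < h → f i (j + d) = f (i + d) j := by
    intro d
    induction d with
    | zero => intro i j _ _; rfl
    | succ d ih =>
      intro i j hi hj
      rw [← Nat.add_assoc, hf i (j + d) (by omega) (by omega), ih (i + 1) j (by omega) (by omega)]
      congr 1; omega
  have k2 : ∀ i j, i ≤ j → j < h → f i j = 0 := by
    intro i j hij hj
    obtain ⟨d, rfl⟩ := Nat.exists_eq_add_of_le hij
    have h1 := key d i i hj hj
    have h2 := hs i (i + d)
    rw [← h1] at h2
    have : (2 : ℂ) * f i (i + d) = 0 := by linear_combination h2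
    simpa using this
  intro i j hi hj
  rcases le_total i j with hij | hij
  · exact k2 i j hij hj
  · rw [hs, k2 j i hij hi, neg_zero]

lemma aux_isoX (p q : V →ₗ[ℂ] V →ₗ[ℂ] ℂ) (hp : ∀ u v, p u v = - p v u)
    (hq : ∀ u v, q u v = - q v u) (h : ℕ) (x : ℕ → V) (h0 : p (x 0) = 0)
    (hx : ∀ i, i + 1 < h → p (x (i + 1)) = q (x i)) :
    ∀ i j, i < h → j < h → q (x i) (x j) = 0 ∧ p (x i) (x j) = 0 := by
  have hQ := aux_hankel h (fun i j => q (x i) (x j)) (fun i j => hq _ _) (by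
    intro i j hi hj
    show q (x i) (x (j + 1)) = q (x (i + 1)) (x j)
    rw [← hx i hi, hp, hx j hj, ← hq])
  intro i j hi hj
  refine ⟨hQ i j hi hj, ?_⟩
  rcases i with _ | i
  · simp [h0]
  · rw [hx i hi]; exact hQ i j (by omega) hj

lemma aux_isoY (p q : V →ₗ[ℂ] V →ₗ[ℂ] ℂ) (hp : ∀ u v, p u v = - p v u)
    (hq : ∀ u v, q u v = - q v u) (h : ℕ) (y : ℕ → V)
    (hy : ∀ i, i + 1 < h → p (y i) = q (y (i + 1))) :
    ∀ i j, i < h → j < h → q (y i) (y j) = 0 ∧ p (y i) (y j) = 0 := by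
  have hQ := aux_hankel h (fun i j => q (y i) (y j)) (fun i j => hq _ _) (by
    intro i j hi hj
    show q (y i) (y (j + 1)) = q (y (i + 1)) (y j)
    rw [← hy i hi, hp, hy j hj, ← hq])
  have hself : ∀ v, p v v = 0 := by
    intro v
    have h2 := hp v v
    have : (2 : ℂ) * p v v = 0 := by linear_combination h2
    simpa using this
  intro i j hi hj
  refine ⟨hQ i j hi hj, ?_⟩
  by_cases h1 : i + 1 < h
  · rw [hy i h1]; exact hQ _ _ h1 hj
  · by_cases h2 : j + 1 < h
    · rw [hp, hy j h2, hQ _ _ h2 hi, neg_zero]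
    · have : i = j := by omega
      subst this; exact hself _

/-- Nonexistence of singular chains. -/
def NoSing (p q : V →ₗ[ℂ] V →ₗ[ℂ] ℂ) (n : ℕ) : Prop :=
  ∀ x : ℕ → V, p (x 0) = 0 → (∀ i, p (x (i + 1)) = q (x i)) → (∀ i, n ≤ i → x i = 0) →
    ∀ i, x i = 0

/-- convolution -/
noncomputable def conv (d : ℕ → ℂ) (x : ℕ → V) (s : ℕ) : V :=
  ∑ r ∈ Finset.range (s + 1), d (s - r) • x r

lemma conv_zero (d : ℕ → ℂ) (x : ℕ → V) : conv d x 0 = d 0 • x 0 := by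
  simp [conv]

lemma conv_chain (p q : V →ₗ[ℂ] V →ₗ[ℂ] ℂ) (d : ℕ → ℂ) (x : ℕ → V) (n : ℕ) (h0 : p (x 0) = 0)
    (hx : ∀ i, i + 1 < n → p (x (i + 1)) = q (x i)) :
    p (conv d x 0) = 0 ∧ ∀ i, i + 1 < n → p (conv d x (i + 1)) = q (conv d x i) := by
  refine ⟨by simp [conv, h0], fun i hi => ?_⟩
  unfold conv
  rw [Finset.sum_range_succ', map_add, map_smul, h0, smul_zero, add_zero, map_sum, map_sum]
  refine Finset.sum_congr rfl fun r hr => ?_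
  have : r < i + 1 := Finset.mem_range.1 hr
  rw [map_smul, map_smul, hx r (by omega)]
  congr 2; omega

lemma conv_inj (d : ℕ → ℂ) (x : ℕ → V) (n : ℕ) (h0 : x 0 ≠ 0)
    (h : ∀ s, s < n → conv d x s = 0) : ∀ s, s < n → d s = 0 := by
  intro s
  induction s using Nat.strong_induction_on with
  | _ s ih =>
    intro hs
    have h1 := h s hs
    unfold conv at h1
    rw [Finset.sum_range_succ', Finset.sum_eq_zero, zero_add] at h1
    · simpa [h0] using h1
    · intro r hr
      have : r < s := Finset.mem_range.1 hr
      rw [ih (s - (r + 1)) (by omega) (by omega), zero_smul]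

/-- extension by zero -/
noncomputable def ext0 (n : ℕ) (z : Fin n → V) (i : ℕ) : V := if h : i < n then z ⟨i, h⟩ else 0

/-- shift -/
noncomputable def sh0 (n : ℕ) (z : Fin n → V) (i : ℕ) : V :=
  match i with
  | 0 => 0
  | i + 1 => ext0 n z i

lemma ext0_add (n : ℕ) (z w : Fin n → V) (i : ℕ) : ext0 n (z + w) i = ext0 n z i + ext0 n w i := by
  unfold ext0; split_ifs <;> simp

lemma ext0_smul (n : ℕ) (c : ℂ) (z : Fin n → V) (i : ℕ) : ext0 n (c • z) i = c • ext0 n z i := by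
  unfold ext0; split_ifs <;> simp

lemma ext0_zero (n : ℕ) (i : ℕ) : ext0 n (0 : Fin n → V) i = 0 := by
  unfold ext0; split_ifs <;> simp

lemma ext0_single (n : ℕ) (j : Fin n) (v : V) (i : ℕ) :
    ext0 n (Pi.single j v) i = if i = j then v else 0 := by
  unfold ext0
  split_ifs with h1 h2 h2
  · have : (⟨i, h1⟩ : Fin n) = j := Fin.ext h2
    rw [this, Pi.single_eq_same]
  · rw [Pi.single_eq_of_ne]
    exact fun h => h2 (congrArg Fin.val h)
  · omega
  · rfl

/-- The chain operator. -/
noncomputable def chainOp (p q : V →ₗ[ℂ] V →ₗ[ℂ] ℂ) (n N : ℕ) :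
    (Fin n → V) →ₗ[ℂ] Module.Dual ℂ (Fin N → V) where
  toFun z := ∑ j : Fin N, (p (ext0 n z j) - q (sh0 n z j)) ∘ₗ LinearMap.proj j
  map_add' z w := by
    rw [← Finset.sum_add_distrib]
    refine Finset.sum_congr rfl fun j _ => ?_
    rcases j with ⟨_ | j, hj⟩
    · ext; simp [ext0_add, sh0, LinearMap.add_comp]
    · ext; simp [ext0_add, sh0, LinearMap.add_comp]; ring
  map_smul' c z := by
    rw [RingHom.id_apply, Finset.smul_sum]
    refine Finset.sum_congr rfl fun j _ => ?_
    rcases j with ⟨_ | j, hj⟩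
    · ext; simp [ext0_smul, sh0]
    · ext; simp [ext0_smul, sh0]; ring

lemma chainOp_apply (p q : V →ₗ[ℂ] V →ₗ[ℂ] ℂ) (n N : ℕ) (z : Fin n → V) (y : Fin N → V) :
    chainOp p q n N z y = ∑ j : Fin N, (p (ext0 n z j) - q (sh0 n z j)) (y j) := by
  simp [chainOp, LinearMap.sum_apply]

lemma chainOp_single_right (p q : V →ₗ[ℂ] V →ₗ[ℂ] ℂ) (n N : ℕ) (z : Fin n → V) (j : Fin N)
    (v : V) : chainOp p q n N z (Pi.single j v) = (p (ext0 n z j) - q (sh0 n z j)) v := by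
  rw [chainOp_apply, Finset.sum_eq_single j]
  · rw [Pi.single_eq_same]
  · intro i _ hi; rw [Pi.single_eq_of_ne hi, map_zero]
  · simp

lemma chainOp_single_left (p q : V →ₗ[ℂ] V →ₗ[ℂ] ℂ) (n N : ℕ) (hN : n ≤ N) (y : Fin N → V)
    (j : Fin n)
    (v : V) : chainOp p q n N (Pi.single j v) y =
      p v (ext0 N y j) - q v (ext0 N y (j + 1)) := by
  rw [chainOp_apply]
  simp only [LinearMap.sub_apply, Finset.sum_sub_distrib]
  congr 1
  · rw [Finset.sum_eq_single ⟨j, by omega⟩]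
    · rw [ext0_single, if_pos rfl, ext0, dif_pos (by omega)]
    · intro i _ hi
      rw [ext0_single, if_neg (fun h => hi (Fin.ext h))]; simp
    · simp
  · have hsh : ∀ i : ℕ, sh0 n (Pi.single j v) i = if i = j + 1 then v else 0 := by
      intro i
      rcases i with _ | i
      · simp [sh0]
      · simp [sh0, ext0_single]
    by_cases h : (j : ℕ) + 1 < N
    · rw [Finset.sum_eq_single ⟨j + 1, h⟩]
      · rw [hsh, if_pos rfl, ext0, dif_pos h]
      · intro i _ hi
        rw [hsh, if_neg (fun h => hi (Fin.ext h))]; simp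
      · simp
    · rw [ext0, dif_neg h, map_zero]
      refine Finset.sum_eq_zero fun i _ => ?_
      rw [hsh, if_neg (by omega)]; simp

/-- Singular case. -/
lemma aux_sing [FiniteDimensional ℂ V] (a b : V →ₗ[ℂ] V →ₗ[ℂ] ℂ) (ha : ∀ u v, a u v = - a v u)
    (hb : ∀ u v, b u v = - b v u) (k : ℕ)
    (hk : NoSing a b k) (hk1 : ¬ NoSing a b (k + 1)) :
    ∃ x e : ℕ → V, x 0 ≠ 0 ∧ a (x 0) = 0 ∧ (∀ i, a (x (i + 1)) = b (x i)) ∧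
      b (x k) = 0 ∧ 
      (∀ i, i + 1 < k → a (e i) = b (e (i + 1))) ∧ 
      (∀ i j, i < k → j ≤ k → b (e i) (x j) = if j = i then 1 else 0) ∧
      (∀ i j, i < k → j ≤ k → a (e i) (x j) = if j = i + 1 then 1 else 0) := by
  unfold NoSing at hk1
  push Not at hk1
  obtain ⟨x, hx0, hx, hxk, i0, hi0⟩ := hk1
  have hne : x 0 ≠ 0 := by
    intro h0
    have := hk (fun i => x (i + 1)) (by show a (x (0 + 1)) = 0; rw [hx, h0, map_zero])
      (fun i => hx (i + 1)) (fun i hi => hxk _ (by omega))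
    rcases i0 with _ | i
    · exact hi0 h0
    · exact hi0 (this i)
  have hbk : b (x k) = 0 := by rw [← hx, hxk _ le_rfl, map_zero]
  rcases k with _ | k
  · exact ⟨x, 0, hne, hx0, hx, hbk, by omega, by omega, by omega⟩
  obtain ⟨φ, hφ⟩ : ∃ φ : Module.Dual ℂ V, φ (x 0) = 1 := by
    obtain ⟨f, hf⟩ := Module.Projective.exists_dual_ne_zero ℂ hne
    exact ⟨(f (x 0))⁻¹ • f, by simp [hf]⟩
  obtain ⟨y, hy⟩ := aux_solve (chainOp a b (k + 1) (k + 2)) (φ ∘ₗ LinearMap.proj 0) (by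
    intro z hz
    have hz' : ∀ j : Fin (k + 2), a (ext0 (k + 1) z j) = b (sh0 (k + 1) z j) := by
      intro j
      ext v
      have := chainOp_single_right a b (k + 1) (k + 2) z j v
      rw [hz, LinearMap.zero_apply, LinearMap.sub_apply] at this
      exact (sub_eq_zero.1 this.symm)
    have := hk (ext0 (k + 1) z) (by simpa [sh0] using hz' 0) (by
      intro i
      by_cases hi : i < k + 1
      · exact hz' ⟨i + 1, by omega⟩
      · rw [ext0, ext0, dif_neg hi, dif_neg (by omega), map_zero, map_zero])
      (fun i hi => by rw [ext0, dif_neg (by omega)]) 0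
    have h0 : z 0 = 0 := this
    simp [h0])
  have hy' : ∀ (i : Fin (k + 1)) v, a v (ext0 (k + 2) y i) - b v (ext0 (k + 2) y (i + 1)) =
      if (i : ℕ) = 0 then φ v else 0 := by
    intro i v
    rw [← chainOp_single_left a b (k + 1) (k + 2) (by omega) y i v, hy]
    split_ifs with h
    · have : i = 0 := Fin.ext h
      subst this; simp
    · have : (0 : Fin (k + 1)) ≠ i := fun h' => h (by rw [← h']; rfl)
      simp [Pi.single_eq_of_ne this]
  let e : ℕ → V := fun i => ext0 (k + 2) y (i + 1)
  have he : ∀ i, i + 1 < k + 1 → a (e i) = b (e (i + 1)) := by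
    intro i hi
    ext v
    have := hy' ⟨i + 1, hi⟩ v
    simp only [Nat.add_eq_zero_iff, one_ne_zero, and_false, if_false] at this
    rw [ha, hb]
    exact congrArg Neg.neg (sub_eq_zero.1 this)
  have e00 : b (e 0) (x 0) = 1 := by
    have := hy' 0 (x 0)
    rw [hx0] at this
    simp only [LinearMap.zero_apply, zero_sub, Fin.val_zero, if_true, hφ] at this
    rw [hb]; exact this
  have step : ∀ i j, i + 1 < k + 1 → b (e (i + 1)) (x (j + 1)) = b (e i) (x j) := by
    intro i j hi
    rw [← he i hi, ha, hx, ← hb]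
  have up : ∀ d i j, i < j → j + d = k + 1 → b (e i) (x j) = 0 := by
    intro d
    induction d with
    | zero => 
      intro i j _ hj
      rw [hb, show j = k + 1 by omega, hbk]; simp
    | succ d ih =>
      intro i j hij hj
      rw [← step i j (by omega)]
      exact ih _ _ (by omega) (by omega)
  have main : ∀ i j, i < k + 1 → j ≤ k + 1 → b (e i) (x j) = if j = i then 1 else 0 := by
    intro i
    induction i with
    | zero =>
      intro j _ hj
      rcases j with _ | j
      · simpa using e00
      · rw [up (k + 1 - (j + 1)) 0 (j + 1) (by omega) (by omega)]; simp
    | succ i ih =>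
      intro j hi hj
      rcases j with _ | j
      · rw [← he i hi, ha, hx0]; simp
      · rw [step i j hi, ih j (by omega) (by omega)]; simp
  refine ⟨x, e, hne, hx0, hx, hbk, he, main, ?_⟩
  intro i j hi hj
  rcases j with _ | j
  · rw [ha, hx0]; simp
  · rw [ha, hx, ← hb, main i j hi (by omega)]; simp

lemma aux_long (p q : V →ₗ[ℂ] V →ₗ[ℂ] ℂ) (h : ℕ)
    (hmax : ∀ x : ℕ → V, p (x 0) = 0 → (∀ i, i < h → p (x (i + 1)) = q (x i)) → x 0 = 0)
    (n : ℕ) (x : ℕ → V) (h0 : p (x 0) = 0) (hx : ∀ i, i + 1 < n → p (x (i + 1)) = q (x i)) :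
    ∀ i, i + h < n → x i = 0 := by
  intro i
  induction i with
  | zero => 
    intro hi
    exact hmax x h0 (fun i hi' => hx i (by omega))
  | succ i ih =>
    intro hi
    refine hmax (fun s => x (i + 1 + s)) ?_ (fun s hs => hx (i + 1 + s) (by omega))
    show p (x (i + 1)) = 0
    rw [hx i (by omega), ih (by omega), map_zero]

/-- Regular case. -/
lemma aux_reg [FiniteDimensional ℂ V] (p q : V →ₗ[ℂ] V →ₗ[ℂ] ℂ) (hp : ∀ u v, p u v = - p v u)
    (hq : ∀ u v, q u v = - q v u) (hns : ∀ n, NoSing p q n) (v0 : V) (hv0 : v0 ≠ 0)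
    (hpv0 : p v0 = 0) :
    ∃ (h : ℕ) (x y : ℕ → V), 0 < h ∧ p (x 0) = 0 ∧
      (∀ i, i + 1 < h → p (x (i + 1)) = q (x i)) ∧
      (∀ i, i + 1 < h → p (y i) = q (y (i + 1))) ∧ p (y (h - 1)) = 0 ∧
      (∀ i j, i < h → j < h → q (y i) (x j) = if j = i then 1 else 0) ∧
      (∀ i j, i < h → j < h → p (y i) (x j) = if j = i + 1 then 1 else 0) := by
  classical
  let Ex : ℕ → Prop := fun n => ∃ x : ℕ → V, x 0 ≠ 0 ∧ p (x 0) = 0 ∧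
    ∀ i, i < n → p (x (i + 1)) = q (x i)
  have hEx0 : Ex 0 := ⟨fun _ => v0, hv0, hpv0, by omega⟩
  have hbd : ∃ n, ¬ Ex n := by
    refine ⟨Module.finrank ℂ V, ?_⟩
    rintro ⟨x, hne, h0, hx⟩
    set m := Module.finrank ℂ V with hm
    have hnl : ¬ LinearIndependent ℂ (fun i : Fin (m + 1) => x i) := by
      intro hl
      have := hl.fintype_card_le_finrank
      simp at this; omega
    apply hnl
    rw [Fintype.linearIndependent_iff]
    intro g hg
    let d : ℕ → ℂ := fun s => ext0 (m + 1) g (m - s)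
    have hc := conv_chain p q d x (m + 1) h0 (fun i hi => hx i (by omega))
    have hcm : conv d x m = 0 := by
      rw [conv, Finset.sum_range, ← hg]
      refine Finset.sum_congr rfl fun i _ => ?_
      have : m - (m - (i : ℕ)) = i := by omega
      simp [d, this, ext0]
    have hz := hns (m + 1) (fun i => if i < m + 1 then conv d x i else 0) (by simpa using hc.1) (by
        intro i
        by_cases h1 : i + 1 < m + 1
        · rw [if_pos h1, if_pos (by omega), hc.2 i h1]
        · rw [if_neg h1, map_zero]
          by_cases h2 : i < m + 1
          · rw [if_pos h2, show i = m by omega, hcm, map_zero]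
          · rw [if_neg h2, map_zero])
        (fun i hi => if_neg (by omega))
    have hd := conv_inj d x (m + 1) hne (fun s hs => by simpa [hs] using hz s)
    intro i
    have := hd (m - i) (by omega)
    have h3 : m - (m - (i : ℕ)) = i := by omega
    simpa [d, h3, ext0] using this
  obtain ⟨h, hh, x, hne, h0, hx⟩ : ∃ h, ¬ Ex (h + 1) ∧ Ex h := by
    have hf := Nat.find_spec hbd
    rcases hn : Nat.find hbd with _ | h
    · rw [hn] at hf; exact absurd hEx0 hf
    · rw [hn] at hf
      exact ⟨h, hf, not_not.1 (Nat.find_min hbd (by omega : h < Nat.find hbd))⟩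
  have hmax : ∀ x : ℕ → V, p (x 0) = 0 → (∀ i, i < h + 1 → p (x (i + 1)) = q (x i)) → x 0 = 0 := by
    intro x h1 h2
    by_contra h3
    exact hh ⟨x, h3, h1, h2⟩
  let M : (Fin (h + 1) → ℂ) →ₗ[ℂ] Module.Dual ℂ (Fin (h + 1) → V) :=
    ∑ r : Fin (h + 1), (LinearMap.proj r).smulRight (q (x (h - r)) ∘ₗ LinearMap.proj 0)
  have hM : ∀ d y, M d y = ∑ r : Fin (h + 1), d r * q (x (h - r)) (y 0) := by
    intro d y; simp [M, LinearMap.sum_apply]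
  obtain ⟨y, hy⟩ := aux_solve
    ((chainOp p q (h + 1) (h + 1)).coprod (-M))
    (LinearMap.proj (Fin.last h) ∘ₗ LinearMap.snd ℂ (Fin (h + 1) → V) (Fin (h + 1) → ℂ)) (by
    rintro ⟨z, d⟩ hz
    let D : ℕ → ℂ := ext0 (h + 1) d
    have hMc : ∀ y, M d y = q (conv D x h) (y 0) := by
      intro y
      rw [hM, conv, Finset.sum_range, map_sum, LinearMap.sum_apply,
        ← Equiv.sum_comp Fin.revPerm]
      refine Finset.sum_congr rfl fun i _ => ?_
      have h1 : h - (h + 1 - ((i : ℕ) + 1)) = i := by omega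
      have h2 : h - (i : ℕ) < h + 1 := by omega
      have h3 : Fin.rev i = ⟨h - i, h2⟩ := Fin.ext (by simp)
      simp only [Fin.revPerm_apply, map_smul, LinearMap.smul_apply, smul_eq_mul, D, ext0, h2,
        dif_pos, h3]
      congr 4; omega
    have hz1 : ∀ y, chainOp p q (h + 1) (h + 1) z y = q (conv D x h) (y 0) := by
      intro y
      have := LinearMap.congr_fun hz y
      rw [LinearMap.coprod_apply, LinearMap.neg_apply, LinearMap.add_apply, LinearMap.neg_apply,
        hMc, LinearMap.zero_apply] at this
      linear_combination this
    have hz' : ∀ j : Fin (h + 1), (p (ext0 (h + 1) z j) - q (sh0 (h + 1) z j)) = 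
        if (j : ℕ) = 0 then q (conv D x h) else 0 := by
      intro j
      ext v
      rw [← chainOp_single_right p q (h + 1) (h + 1) z j v, hz1]
      split_ifs with hj
      · have : j = 0 := Fin.ext hj
        subst this; simp
      · have : (0 : Fin (h + 1)) ≠ j := fun h' => hj (by rw [← h']; rfl)
        simp [Pi.single_eq_of_ne this]
    have hc := conv_chain p q D x (h + 1) h0 (fun i hi => hx i (by omega))
    have hlong := aux_long p q (h + 1) hmax (h + 1 + (h + 1))
      (fun i => if i < h + 1 then conv D x i else ext0 (h + 1) z (i - (h + 1)))
      (by simpa using hc.1) (by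
        intro i hi
        by_cases h1 : i + 1 < h + 1
        · rw [if_pos h1, if_pos (by omega), hc.2 i h1]
        · rw [if_neg h1]
          by_cases h2 : i < h + 1
          · rw [if_pos h2]
            have : i = h := by omega
            subst this
            simpa [sh0] using hz' 0
          · rw [if_neg h2]
            have := hz' ⟨i + 1 - (h + 1), by omega⟩
            rw [if_neg (by simp only; omega), sub_eq_zero] at this
            rw [this]
            show q (sh0 (h + 1) z (i + 1 - (h + 1))) = _
            rw [show i + 1 - (h + 1) = (i - (h + 1)) + 1 by omega]
            rfl)
    have hd := conv_inj D x (h + 1) hne (fun s hs => by simpa [hs] using hlong s (by omega))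
      h (by omega)
    simp only [D, ext0, Nat.lt_succ_self, dif_pos] at hd
    exact hd)
  let Y : ℕ → V := ext0 (h + 1) y
  have hy1 : ∀ i, i < h + 1 → p (Y i) = q (Y (i + 1)) := by
    intro i hi
    ext v
    have := hy (Pi.single ⟨i, hi⟩ v, 0)
    rw [LinearMap.coprod_apply, map_zero, add_zero, 
      chainOp_single_left p q (h + 1) (h + 1) le_rfl] at this
    simp only [LinearMap.comp_apply, LinearMap.snd_apply, map_zero, sub_eq_zero] at this
    rw [hp, hq]
    exact congrArg Neg.neg this
  have hyl : p (Y h) = 0 := by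
    rw [hy1 h (by omega)]
    simp [Y, ext0]
  have hy0 : ∀ j, j < h + 1 → q (Y 0) (x j) = if j = 0 then 1 else 0 := by
    intro j hj
    have := hy (0, Pi.single ⟨h - j, by omega⟩ 1)
    rw [LinearMap.coprod_apply, map_zero, zero_add, LinearMap.neg_apply, LinearMap.neg_apply, hM,
      Finset.sum_eq_single ⟨h - j, by omega⟩] at this
    · dsimp only at this
      rw [Pi.single_eq_same, one_mul, ← hq] at this
      have h2 : h - (h - j) = j := by omega
      simp only [h2, LinearMap.comp_apply, LinearMap.snd_apply, LinearMap.proj_apply] at this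
      have h3 : Y 0 = y 0 := by simp [Y, ext0]
      rw [h3, this, Pi.single_apply]
      congr 1
      rw [Fin.ext_iff]
      simp only [Fin.val_last, eq_iff_iff]
      omega
    · intro i _ hi
      dsimp only
      rw [Pi.single_eq_of_ne hi, zero_mul]
    · simp
  have main : ∀ i j, i < h + 1 → j < h + 1 → q (Y i) (x j) = if j = i then 1 else 0 := by
    intro i
    induction i with
    | zero => intro j _ hj; exact hy0 j hj
    | succ i ih =>
      intro j hi hj
      rw [← hy1 i (by omega), hp]
      rcases j with _ | j
      · rw [h0]; simp
      · rw [hx j (by omega), ← hq, ih j (by omega) (by omega)]; simp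
  refine ⟨h + 1, x, Y, by omega, h0, fun i hi => hx i (by omega), fun i hi => hy1 i (by omega),
    hyl, main, ?_⟩
  intro i j hi hj
  rcases j with _ | j
  · rw [hp, h0]; simp
  · rw [hp, hx j (by omega), ← hq, main i j hi (by omega)]; simp

/-- Existence of a canonical basis. -/
def Can (V : Type*) [AddCommGroup V] [Module ℂ V] (a b : V →ₗ[ℂ] V →ₗ[ℂ] ℂ) : Prop :=
  ∃ (ι : Type) (_ : Fintype ι) (blk : ι → SkewBlock)
    (B : Module.Basis (Σ i, Fin (blk i).size) ℂ V), (∀ i, (blk i).valid) ∧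
    (∀ i s t, a (B ⟨i, s⟩) (B ⟨i, t⟩) = (blk i).matA s t) ∧
    (∀ i s t, b (B ⟨i, s⟩) (B ⟨i, t⟩) = (blk i).matB s t) ∧
    (∀ i j s t, i ≠ j → a (B ⟨i, s⟩) (B ⟨j, t⟩) = 0) ∧
    (∀ i j s t, i ≠ j → b (B ⟨i, s⟩) (B ⟨j, t⟩) = 0)

/-- index equivalence -/
def optEquiv {ι : Type} (blk0 : SkewBlock) (blk : ι → SkewBlock) :
    (Fin blk0.size ⊕ Σ i, Fin (blk i).size) ≃
      Σ o : Option ι, Fin (Option.elim o blk0 blk).size where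
  toFun
    | .inl s => ⟨none, s⟩
    | .inr ⟨i, j⟩ => ⟨some i, j⟩
  invFun
    | ⟨none, s⟩ => .inl s
    | ⟨some i, j⟩ => .inr ⟨i, j⟩
  left_inv := by rintro (s | ⟨i, j⟩) <;> rfl
  right_inv := by rintro ⟨_ | i, j⟩ <;> rfl

/-- restriction of a form -/
def resF (W : Submodule ℂ V) (a : V →ₗ[ℂ] V →ₗ[ℂ] ℂ) : W →ₗ[ℂ] W →ₗ[ℂ] ℂ :=
  a.domRestrict₁₂ W W

lemma resF_apply (W : Submodule ℂ V) (a : V →ₗ[ℂ] V →ₗ[ℂ] ℂ) (u v : W) :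
    resF W a u v = a u v := rfl

lemma aux_split [FiniteDimensional ℂ V] (a b : V →ₗ[ℂ] V →ₗ[ℂ] ℂ) (ha : ∀ u v, a u v = - a v u)
    (hb : ∀ u v, b u v = - b v u)
    (IH : ∀ W : Submodule ℂ V, Module.finrank ℂ W < Module.finrank ℂ V →
      Can W (resF W a) (resF W b))
    (blk0 : SkewBlock) (hv : blk0.valid) (u : Fin blk0.size → V)
    (g : Fin blk0.size → Module.Dual ℂ V) (hg : ∀ s t, g s (u t) = if s = t then 1 else 0)
    (hA : ∀ s t, a (u s) (u t) = blk0.matA s t) (hB : ∀ s t, b (u s) (u t) = blk0.matB s t)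
    (hw : ∀ w, (∀ s, g s w = 0) → ∀ t, a (u t) w = 0 ∧ b (u t) w = 0) : Can V a b := by
  classical
  let W : Submodule ℂ V := ⨅ s, LinearMap.ker (g s)
  have hW : ∀ w, w ∈ W ↔ ∀ s, g s w = 0 := by intro w; simp [W, Submodule.mem_iInf]
  have hpos : 0 < blk0.size := by
    cases blk0 <;> simp [SkewBlock.valid, SkewBlock.size] at hv ⊢ <;> omega
  have hlt : Module.finrank ℂ W < Module.finrank ℂ V := by
    apply Submodule.finrank_lt
    intro h
    have : u ⟨0, hpos⟩ ∈ W := by rw [h]; trivial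
    have := (hW _).1 this ⟨0, hpos⟩
    rw [hg] at this; simp at this
  obtain ⟨ι, hι, blk, BW, h1, h2, h3, h4, h5⟩ := IH W hlt
  let Φ : ((Fin blk0.size → ℂ) × W) →ₗ[ℂ] V := (Fintype.linearCombination ℂ u).coprod W.subtype
  have hΦ : ∀ c w, Φ (c, w) = ∑ s, c s • u s + w := by
    intro c w; simp [Φ, Fintype.linearCombination_apply]
  have hgs : ∀ t (c : Fin blk0.size → ℂ), g t (∑ s, c s • u s) = c t := by
    intro t c; simp [hg]
  have hbij : Function.Bijective Φ := by
    constructor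
    · rw [injective_iff_map_eq_zero]
      rintro ⟨c, w⟩ h
      rw [hΦ] at h
      have hc : c = 0 := by
        ext t
        have := congrArg (g t) h
        rw [map_add, hgs, (hW w).1 w.2, add_zero, map_zero] at this
        exact this
      subst hc
      have : (w : V) = 0 := by simpa using h
      simp [Subtype.ext_iff, this]
    · intro v
      refine ⟨(fun s => g s v, ⟨v - ∑ s, g s v • u s, ?_⟩), ?_⟩
      · rw [hW]; intro t
        rw [map_sub, hgs t (fun s => g s v), sub_self]
      · rw [hΦ]; simp
  let e := LinearEquiv.ofBijective Φ hbij
  let B0 := (((Pi.basisFun ℂ (Fin blk0.size)).prod BW).map e).reindex (optEquiv blk0 blk)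
  have B0n : ∀ s : Fin blk0.size, B0 ⟨none, s⟩ = u s := by
    intro s
    have : (optEquiv blk0 blk).symm ⟨none, s⟩ = .inl s := rfl
    simp only [B0, Module.Basis.reindex_apply, this, Module.Basis.map_apply]
    show Φ _ = _
    rw [Module.Basis.prod_apply]
    simp [Φ]
  have B0s : ∀ i s, B0 ⟨some i, s⟩ = (BW ⟨i, s⟩ : V) := by
    intro i s
    have : (optEquiv blk0 blk).symm ⟨some i, s⟩ = .inr ⟨i, s⟩ := rfl
    simp only [B0, Module.Basis.reindex_apply, this, Module.Basis.map_apply]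
    show Φ _ = _
    rw [Module.Basis.prod_apply]
    simp [Φ]
  have hw' : ∀ (w : W) t, a (u t) w = 0 ∧ b (u t) w = 0 := fun w t => hw w ((hW w).1 w.2) t
  refine ⟨Option ι, inferInstance, fun o => Option.elim o blk0 blk, B0, ?_, ?_, ?_, ?_, ?_⟩
  · rintro (_ | i)
    · exact hv
    · exact h1 i
  · rintro (_ | i) s t
    · exact (congrArg₂ (fun v w => a v w) (B0n s) (B0n t)).trans (hA s t)
    · exact (congrArg₂ (fun v w => a v w) (B0s i s) (B0s i t)).trans (h2 i s t)
  · rintro (_ | i) s t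
    · exact (congrArg₂ (fun v w => b v w) (B0n s) (B0n t)).trans (hB s t)
    · exact (congrArg₂ (fun v w => b v w) (B0s i s) (B0s i t)).trans (h3 i s t)
  · rintro (_ | i) (_ | j) s t hij
    · exact absurd rfl hij
    · exact (congrArg₂ (fun v w => a v w) (B0n s) (B0s j t)).trans (hw' _ _).1
    · exact (congrArg₂ (fun v w => a v w) (B0s i s) (B0n t)).trans
        ((ha _ _).trans (neg_eq_zero.2 (hw' _ _).1))
    · exact (congrArg₂ (fun v w => a v w) (B0s i s) (B0s j t)).trans
        (h4 i j s t (fun h => hij (by rw [h])))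
  · rintro (_ | i) (_ | j) s t hij
    · exact absurd rfl hij
    · exact (congrArg₂ (fun v w => b v w) (B0n s) (B0s j t)).trans (hw' _ _).2
    · exact (congrArg₂ (fun v w => b v w) (B0s i s) (B0n t)).trans
        ((hb _ _).trans (neg_eq_zero.2 (hw' _ _).2))
    · exact (congrArg₂ (fun v w => b v w) (B0s i s) (B0s j t)).trans
        (h5 i j s t (fun h => hij (by rw [h])))

lemma aux_block [FiniteDimensional ℂ V] (a b : V →ₗ[ℂ] V →ₗ[ℂ] ℂ) (ha : ∀ u v, a u v = - a v u)
    (hb : ∀ u v, b u v = - b v u)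
    (IH : ∀ W : Submodule ℂ V, Module.finrank ℂ W < Module.finrank ℂ V →
      Can W (resF W a) (resF W b))
    (blk0 : SkewBlock) (hv : blk0.valid) (m n : ℕ) (ε : Fin blk0.size ≃ Fin m ⊕ Fin n)
    (MA MB : Matrix (Fin m) (Fin n) ℂ)
    (hMA : ∀ s t, blk0.matA s t = Matrix.fromBlocks 0 MA (-MAᵀ) 0 (ε s) (ε t))
    (hMB : ∀ s t, blk0.matB s t = Matrix.fromBlocks 0 MB (-MBᵀ) 0 (ε s) (ε t))
    (e f : ℕ → V) (ge gf : ℕ → Module.Dual ℂ V)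
    (hee : ∀ i j, i < m → j < m → b (e i) (e j) = 0 ∧ a (e i) (e j) = 0)
    (hff : ∀ i j, i < n → j < n → b (f i) (f j) = 0 ∧ a (f i) (f j) = 0)
    (haef : ∀ (i : Fin m) (j : Fin n), a (e i) (f j) = MA i j)
    (hbef : ∀ (i : Fin m) (j : Fin n), b (e i) (f j) = MB i j)
    (gee : ∀ i j, i < m → j < m → ge i (e j) = if i = j then 1 else 0)
    (gef : ∀ i j, i < m → j < n → ge i (f j) = 0)
    (gfe : ∀ i j, i < n → j < m → gf i (e j) = 0)
    (gff : ∀ i j, i < n → j < n → gf i (f j) = if i = j then 1 else 0)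
    (hw : ∀ w, (∀ i, i < m → ge i w = 0) → (∀ i, i < n → gf i w = 0) →
      (∀ i, i < m → a (e i) w = 0 ∧ b (e i) w = 0) ∧
      (∀ i, i < n → a (f i) w = 0 ∧ b (f i) w = 0)) : Can V a b := by
  let U : Fin m ⊕ Fin n → V := Sum.elim (fun i => e i) (fun i => f i)
  let G : Fin m ⊕ Fin n → Module.Dual ℂ V := Sum.elim (fun i => ge i) (fun i => gf i)
  have hUA : ∀ s t, a (U s) (U t) = Matrix.fromBlocks 0 MA (-MAᵀ) 0 s t := by
    rintro (s | s) (t | t)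
    · simpa [U] using (hee s t s.2 t.2).2
    · simpa [U] using haef s t
    · simp only [U, Sum.elim_inl, Sum.elim_inr]
      rw [ha, haef]; simp
    · simpa [U] using (hff s t s.2 t.2).2
  have hUB : ∀ s t, b (U s) (U t) = Matrix.fromBlocks 0 MB (-MBᵀ) 0 s t := by
    rintro (s | s) (t | t)
    · simpa [U] using (hee s t s.2 t.2).1
    · simpa [U] using hbef s t
    · simp only [U, Sum.elim_inl, Sum.elim_inr]
      rw [hb, hbef]; simp
    · simpa [U] using (hff s t s.2 t.2).1
  have hGU : ∀ s t, G s (U t) = if s = t then 1 else 0 := by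
    rintro (s | s) (t | t)
    · simpa [U, G, Fin.ext_iff] using gee s t s.2 t.2
    · simpa [U, G] using gef s t s.2 t.2
    · simpa [U, G] using gfe s t s.2 t.2
    · simpa [U, G, Fin.ext_iff] using gff s t s.2 t.2
  refine aux_split a b ha hb IH blk0 hv (U ∘ ε) (G ∘ ε) ?_ ?_ ?_ ?_
  · intro s t
    simp [hGU]
  · intro s t; rw [hMA]; exact hUA _ _
  · intro s t; rw [hMB]; exact hUB _ _
  · intro w hw1 t
    obtain ⟨k1, k2⟩ := hw w
      (fun i hi => by simpa [G] using hw1 (ε.symm (.inl ⟨i, hi⟩)))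
      (fun i hi => by simpa [G] using hw1 (ε.symm (.inr ⟨i, hi⟩)))
    show a (U (ε t)) w = 0 ∧ b (U (ε t)) w = 0
    rcases ε t with s | s
    · exact k1 s s.2
    · exact k2 s s.2

lemma aux_main (N : ℕ) : ∀ (V : Type) [AddCommGroup V] [Module ℂ V] [FiniteDimensional ℂ V]
    (a b : V →ₗ[ℂ] V →ₗ[ℂ] ℂ), (∀ u v, a u v = - a v u) → (∀ u v, b u v = - b v u) →
    Module.finrank ℂ V = N → Can V a b := by
  induction N using Nat.strong_induction_on with
  | _ N IH' =>
  intro V _ _ _ a b ha hb hN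
  have IH : ∀ W : Submodule ℂ V, Module.finrank ℂ W < Module.finrank ℂ V →
      Can W (resF W a) (resF W b) := by
    intro W hW
    exact IH' _ (hN ▸ hW) W _ _ (fun u v => ha u v) (fun u v => hb u v) rfl
  classical
  by_cases hsing : ∃ n, ¬ NoSing a b n
  · -- singular block
    obtain ⟨k, hk, hk1⟩ : ∃ k, NoSing a b k ∧ ¬ NoSing a b (k + 1) := by
      have hf := Nat.find_spec hsing
      rcases hn : Nat.find hsing with _ | h
      · rw [hn] at hf
        exact absurd (fun x _ _ h i => h i (Nat.zero_le _)) hf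
      · rw [hn] at hf
        exact ⟨h, not_not.1 (Nat.find_min hsing (by omega : h < Nat.find hsing)), hf⟩
    obtain ⟨x, e, hne, hx0, hx, hxk, he, hbe, hae⟩ := aux_sing a b ha hb k hk hk1
    obtain ⟨φ, hφ⟩ : ∃ φ : Module.Dual ℂ V, φ (x 0) = 1 := by
      obtain ⟨f, hf⟩ := Module.Projective.exists_dual_ne_zero ℂ hne
      exact ⟨(f (x 0))⁻¹ • f, by simp [hf]⟩
    have hisoE := aux_isoY a b ha hb k e he
    have hisoX := aux_isoX a b ha hb (k + 1) x hx0 (fun i _ => hx i)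
    refine aux_block a b ha hb IH (.M k) trivial k (k + 1) finSumFinEquiv.symm (Fmat k) (Gmat k)
      (fun _ _ => rfl) (fun _ _ => rfl) e x (fun i => -b (x i))
      (fun i => match i with
        | 0 => if k = 0 then φ else b (e 0)
        | i + 1 => a (e i)) hisoE hisoX ?_ ?_ ?_ ?_ ?_ ?_ ?_
    · intro i j
      rw [hae i j i.2 (by omega)]; rfl
    · intro i j
      rw [hbe i j i.2 (by omega)]; rfl
    · intro i j hi hj
      rw [LinearMap.neg_apply, ← hb, hbe j i hj (by omega)]
    · intro i j hi hj
      rw [LinearMap.neg_apply, (hisoX i j (by omega) hj).1, neg_zero]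
    · rintro (_ | i) j hi hj
      · show (if k = 0 then φ else b (e 0)) (e j) = 0
        rw [if_neg (by omega)]; exact (hisoE 0 j (by omega) hj).1
      · exact (hisoE i j (by omega) hj).2
    · rintro (_ | i) j hi hj
      · show (if k = 0 then φ else b (e 0)) (x j) = _
        split_ifs with h1 h2 h2
        · rw [← h2, hφ]
        · omega
        · rw [hbe 0 j (by omega) (by omega), if_pos h2.symm]
        · rw [hbe 0 j (by omega) (by omega), if_neg (fun h => h2 h.symm)]
      · show a (e i) (x j) = _
        rw [hae i j (by omega) (by omega)]
        simp only [eq_comm]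
    · intro w h1 h2
      have bx : ∀ i, i < k + 1 → b (x i) w = 0 := by
        intro i hi
        by_cases hik : i = k
        · rw [hik, hxk]; rfl
        · simpa using h1 i (by omega)
      have ae : ∀ i, i < k → a (e i) w = 0 := fun i hi => h2 (i + 1) (by omega)
      refine ⟨fun i hi => ⟨ae i hi, ?_⟩, fun i hi => ⟨?_, bx i hi⟩⟩
      · rcases i with _ | i
        · have := h2 0 (by omega)
          simp only [if_neg (show ¬ k = 0 by omega)] at this
          exact this
        · rw [← he i hi]; exact ae i (by omega)
      · rcases i with _ | i
        · rw [hx0]; rfl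
        · rw [hx]; exact bx i (by omega)
  · push Not at hsing
    have regw : ∀ (p q : V →ₗ[ℂ] V →ₗ[ℂ] ℂ) (h : ℕ) (x y : ℕ → V), p (x 0) = 0 → 
      (∀ i, i + 1 < h → p (x (i + 1)) = q (x i)) →
      (∀ i, i + 1 < h → p (y i) = q (y (i + 1))) → p (y (h - 1)) = 0 →
      ∀ w, (∀ i, i < h → (-q (x i)) w = 0) → (∀ i, i < h → q (y i) w = 0) →
      (∀ i, i < h → p (y i) w = 0 ∧ q (y i) w = 0) ∧ 
      (∀ i, i < h → p (x i) w = 0 ∧ q (x i) w = 0) := by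
      intro p q h x y h1 h2 h3 h4 w h5 h6
      refine ⟨fun i hi => ⟨?_, h6 i hi⟩, fun i hi => ⟨?_, by simpa using h5 i hi⟩⟩
      · by_cases hi' : i + 1 < h
        · rw [h3 i hi', h6 _ hi']
        · rw [show i = h - 1 by omega, h4]; rfl
      · rcases i with _ | i
        · rw [h1]; rfl
        · rw [h2 i hi]; simpa using h5 i (by omega)
    by_cases hdeg : ∃ v : V, v ≠ 0 ∧ b v = 0
    · -- infinite eigenvalue
      obtain ⟨v0, hv0, hbv0⟩ := hdeg
      have hns : ∀ n, NoSing b a n := by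
        intro n x h0 hx hn i
        by_cases hi : i < n
        · have := hsing n (fun j => if j < n then x (n - 1 - j) else 0) (by
            rw [if_pos (by omega)]
            rw [Nat.sub_zero, ← hx, hn _ (by omega), map_zero]) (by
            intro j
            by_cases h1 : j + 1 < n
            · rw [if_pos h1, if_pos (by omega), ← hx]
              congr 2; omega
            · rw [if_neg h1, map_zero]
              by_cases h2 : j < n
              · rw [if_pos h2, show n - 1 - j = 0 by omega, h0]
              · rw [if_neg h2, map_zero])
            (fun j hj => if_neg (by omega)) (n - 1 - i)
          rw [if_pos (by omega)] at this
          rwa [show n - 1 - (n - 1 - i) = i by omega] at this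
        · exact hn i (by omega)
      obtain ⟨h, x, y, hpos, h0, hx, hy, hyl, hq, hp⟩ := aux_reg b a hb ha hns v0 hv0 hbv0
      have hisoY := aux_isoY b a hb ha h y hy
      have hisoX := aux_isoX b a hb ha h x h0 hx
      refine aux_block a b ha hb IH (.K h) hpos h h finSumFinEquiv.symm 1 (jordanBlock h 0)
        (fun _ _ => by rw [Matrix.transpose_one]; rfl) (fun _ _ => rfl) y x (fun i => -a (x i))
        (fun i => a (y i)) (fun i j hi hj => (hisoY i j hi hj).symm)
        (fun i j hi hj => (hisoX i j hi hj).symm) ?_ ?_ ?_ ?_ ?_ ?_ ?_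
      · intro i j
        rw [hq i j i.2 j.2, Matrix.one_apply]
        simp only [Fin.ext_iff, eq_comm]
      · intro i j
        rw [hp i j i.2 j.2]
        simp only [jordanBlock, Matrix.of_apply, Fin.ext_iff]
        split_ifs <;> first | rfl | omega
      · intro i j hi hj
        rw [LinearMap.neg_apply, ← ha, hq j i hj hi]
      · intro i j hi hj
        rw [LinearMap.neg_apply, (hisoX i j hi hj).1, neg_zero]
      · intro i j hi hj
        exact (hisoY i j hi hj).1
      · intro i j hi hj
        rw [hq i j hi hj]; simp only [eq_comm]
      · intro w h1 h2
        obtain ⟨k1, k2⟩ := regw b a h x y h0 hx hy hyl w h1 h2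
        exact ⟨fun i hi => (k1 i hi).symm, fun i hi => (k2 i hi).symm⟩
    · push Not at hdeg
      by_cases hV : Nontrivial V
      · -- finite eigenvalue
        have hbinj : Function.Injective b := by
          rw [injective_iff_map_eq_zero]
          intro v hv
          by_contra h
          exact hdeg v h hv
        let eb : V ≃ₗ[ℂ] Module.Dual ℂ V :=
          LinearEquiv.ofInjectiveOfFinrankEq b hbinj (Subspace.dual_finrank_eq).symm
        have heb : ∀ v, eb v = b v := fun v => rfl
        obtain ⟨μ, hμ⟩ := Module.End.exists_eigenvalue (eb.symm.toLinearMap ∘ₗ a : V →ₗ[ℂ] V)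
        obtain ⟨v0, hv0⟩ := hμ.exists_hasEigenvector
        have h1 : a v0 = μ • b v0 := by
          have := hv0.apply_eq_smul
          rw [LinearMap.comp_apply] at this
          have := congrArg eb this
          rw [map_smul, heb v0] at this
          simpa using this
        let p := a - μ • b
        have hp' : ∀ u v, p u v = - p v u := by
          intro u v
          simp only [p, LinearMap.sub_apply, LinearMap.smul_apply, smul_eq_mul]
          rw [ha, hb]; ring
        have hns : ∀ n, NoSing p b n := by
          intro n x _ hx hn
          have : ∀ d i, n ≤ i + d → x i = 0 := by
            intro d
            induction d with
            | zero => exact hn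
            | succ d ih =>
              intro i hi
              by_contra hc
              refine hdeg (x i) hc ?_
              rw [← hx, ih (i + 1) (by omega), map_zero]
          exact fun i => this n i (by omega)
        obtain ⟨h, x, y, hpos, h0, hx, hy, hyl, hq, hp⟩ := aux_reg p b hp' hb hns v0 hv0.2 (by
          simp [p, h1])
        have hisoY := aux_isoY p b hp' hb h y hy
        have hisoX := aux_isoX p b hp' hb h x h0 hx
        have hap : ∀ u v, a u v = p u v + μ * b u v := by
          intro u v; simp [p]
        refine aux_block a b ha hb IH (.H h μ) hpos h h finSumFinEquiv.symm (jordanBlock h μ) 1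
          (fun _ _ => rfl) (fun _ _ => by rw [Matrix.transpose_one]; rfl) y x (fun i => -b (x i))
          (fun i => b (y i)) ?_ ?_ ?_ ?_ ?_ ?_ ?_ ?_ ?_
        · intro i j hi hj
          rw [hap, (hisoY i j hi hj).1, (hisoY i j hi hj).2]; simp
        · intro i j hi hj
          rw [hap, (hisoX i j hi hj).1, (hisoX i j hi hj).2]; simp
        · intro i j
          rw [hap, hp i j i.2 j.2, hq i j i.2 j.2]
          simp only [jordanBlock, Matrix.of_apply, Fin.ext_iff]
          split_ifs <;> first | omega | simp
        · intro i j
          rw [hq i j i.2 j.2, Matrix.one_apply]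
          simp only [Fin.ext_iff, eq_comm]
        · intro i j hi hj
          rw [LinearMap.neg_apply, ← hb, hq j i hj hi]
        · intro i j hi hj
          rw [LinearMap.neg_apply, (hisoX i j hi hj).1, neg_zero]
        · intro i j hi hj
          exact (hisoY i j hi hj).1
        · intro i j hi hj
          rw [hq i j hi hj]; simp only [eq_comm]
        · intro w h1 h2
          obtain ⟨k1, k2⟩ := regw p b h x y h0 hx hy hyl w h1 h2
          refine ⟨fun i hi => ⟨?_, (k1 i hi).2⟩, fun i hi => ⟨?_, (k2 i hi).2⟩⟩
          · rw [hap, (k1 i hi).1, (k1 i hi).2]; simp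
          · rw [hap, (k2 i hi).1, (k2 i hi).2]; simp
      · -- trivial space
        rw [not_nontrivial_iff_subsingleton] at hV
        haveI : IsEmpty (Σ i : Empty, Fin ((fun _ : Empty => SkewBlock.K 0) i).size) :=
          ⟨fun s => s.1.elim⟩
        exact ⟨Empty, inferInstance, fun _ => SkewBlock.K 0, Module.Basis.empty V,
          fun i => i.elim, fun i => i.elim, fun i => i.elim, fun i => i.elim, fun i => i.elim⟩

end Aux

/-- Canonical form of skew-symmetric matrix pencils under congruence (Thompson):
every skew-symmetric pencil `A − λB` is congruent to a direct sum of blocks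
`H_h(μ)`, `K_k`, and `M_k`. -/
theorem skew_symmetric_pencil_canonical_form (m : ℕ)
    (A B : Matrix (Fin m) (Fin m) ℂ) (hA : Aᵀ = -A) (hB : Bᵀ = -B) :
    ∃ (S : Matrix (Fin m) (Fin m) ℂ) (n : ℕ) (blk : Fin n → SkewBlock)
      (e : Fin m ≃ (Σ i : Fin n, Fin (blk i).size)),
      IsUnit S ∧ (∀ i, (blk i).valid) ∧
      Sᵀ * A * S = (Matrix.blockDiagonal' fun i => (blk i).matA).submatrix e e ∧
      Sᵀ * B * S = (Matrix.blockDiagonal' fun i => (blk i).matB).submatrix e e := by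
  classical
  let a : (Fin m → ℂ) →ₗ[ℂ] (Fin m → ℂ) →ₗ[ℂ] ℂ := Matrix.toLinearMap₂' ℂ A
  let b : (Fin m → ℂ) →ₗ[ℂ] (Fin m → ℂ) →ₗ[ℂ] ℂ := Matrix.toLinearMap₂' ℂ B
  have skew : ∀ M : Matrix (Fin m) (Fin m) ℂ, Mᵀ = -M → ∀ u v : Fin m → ℂ,
      Matrix.toLinearMap₂' ℂ M u v = - Matrix.toLinearMap₂' ℂ M v u := by
    intro M hM u v
    rw [Matrix.toLinearMap₂'_apply', Matrix.toLinearMap₂'_apply', Matrix.dotProduct_mulVec,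
      ← Matrix.mulVec_transpose, hM, Matrix.neg_mulVec, neg_dotProduct, dotProduct_comm]
  obtain ⟨ι, _, blk, B0, h1, h2, h3, h4, h5⟩ := aux_main m (Fin m → ℂ) a b (skew A hA) (skew B hB)
    (by simp)
  let ei : Fin (Fintype.card ι) ≃ ι := (Fintype.equivFin ι).symm
  let es : (Σ i : Fin (Fintype.card ι), Fin (blk (ei i)).size) ≃ Σ i, Fin (blk i).size :=
    Equiv.sigmaCongrLeft (β := fun i => Fin (blk i).size) ei
  let e0 : Fin m ≃ Σ i, Fin (blk i).size := (Pi.basisFun ℂ (Fin m)).indexEquiv B0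
  let Bm : Module.Basis (Fin m) ℂ (Fin m → ℂ) := B0.reindex e0.symm
  let S : Matrix (Fin m) (Fin m) ℂ := (Pi.basisFun ℂ (Fin m)).toMatrix Bm
  have hS : ∀ i j, S i j = Bm j i := fun i j => by simp [S, Module.Basis.toMatrix_apply]
  have hcong : ∀ M : Matrix (Fin m) (Fin m) ℂ, ∀ i j, (Sᵀ * M * S) i j =
      (Matrix.toLinearMap₂' ℂ M : (Fin m → ℂ) →ₗ[ℂ] (Fin m → ℂ) →ₗ[ℂ] ℂ) (B0 (e0 i)) (B0 (e0 j)) := by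
    intro M i j
    have hB : ∀ j, B0 (e0 j) = Sᵀ j := by
      intro j; ext i; rw [Matrix.transpose_apply, hS]; simp [Bm]
    rw [hB, hB, Matrix.toLinearMap₂'_apply', Matrix.mul_assoc, Matrix.mul_apply']
    rfl
  refine ⟨S, Fintype.card ι, fun i => blk (ei i), e0.trans es.symm, ?_, fun i => h1 _, ?_, ?_⟩
  · have := (Pi.basisFun ℂ (Fin m)).invertibleToMatrix Bm
    exact isUnit_of_invertible S
  · ext i j
    rw [hcong, Matrix.submatrix_apply]
    obtain ⟨⟨i1, i2⟩, hi⟩ := es.surjective (e0 i)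
    obtain ⟨⟨j1, j2⟩, hj⟩ := es.surjective (e0 j)
    simp only [Equiv.trans_apply, ← hi, ← hj, Equiv.symm_apply_apply]
    show a (B0 ⟨ei i1, i2⟩) (B0 ⟨ei j1, j2⟩) = _
    by_cases hij : i1 = j1
    · subst hij
      rw [h2, Matrix.blockDiagonal'_apply_eq]
    · rw [h4 _ _ _ _ (fun h => hij (ei.injective h)), Matrix.blockDiagonal'_apply_ne _ _ _ hij]
  · ext i j
    rw [hcong, Matrix.submatrix_apply]
    obtain ⟨⟨i1, i2⟩, hi⟩ := es.surjective (e0 i)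
    obtain ⟨⟨j1, j2⟩, hj⟩ := es.surjective (e0 j)
    simp only [Equiv.trans_apply, ← hi, ← hj, Equiv.symm_apply_apply]
    show b (B0 ⟨ei i1, i2⟩) (B0 ⟨ei j1, j2⟩) = _
    by_cases hij : i1 = j1
    · subst hij
      rw [h3, Matrix.blockDiagonal'_apply_eq]
    · rw [h5 _ _ _ _ (fun h => hij (ei.injective h)), Matrix.blockDiagonal'_apply_ne _ _ _ hij]
end

section
/- Let m and r be integers with 2 ≤ 2r ≤ m−1, and let P be an m×m skew-symmetric matrix polynomial over ℂ in which every entry has degree at most 1 (a skew-symmetric matrix pencil), with normal rank at most 2r. Then there exist constant vectors u₁, …, u_r ∈ ℂ^m and polynomial vectors v₁, …, v_r ∈ (ℂ[λ])^m with every entry of each vᵢ of degree at most 1, such that P = Σᵢ₌₁^r (uᵢ vᵢᵀ − vᵢ uᵢᵀ). In particular, the set of m×m skew-symmetric pencils of normal rank at most 2r coincides exactly (without taking closures) with the set of pencils of the form U Vᵀ − V Uᵀ with U ∈ Matrix (Fin m) (Fin r) ℂ constant and V an m×r matrix polynomial of grade 1. -/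
open Polynomial Matrix

lemma aux_exists {m : ℕ} (A B : Matrix (Fin m) (Fin m) ℂ) (hA : Aᵀ = -A) (hB : Bᵀ = -B)
    (h0 : ¬ (A = 0 ∧ B = 0)) :
    ∃ (x w : Fin m → ℂ) (a b : ℂ), A *ᵥ x = a • w ∧ B *ᵥ x = b • w ∧ w ≠ 0 ∧
      (a ≠ 0 ∨ b ≠ 0) := by
  classical
  let N : Submodule ℂ (Fin m → ℂ) := LinearMap.ker A.mulVecLin ⊓ LinearMap.ker B.mulVecLin
  have hN : ∀ z, z ∈ N ↔ A *ᵥ z = 0 ∧ B *ᵥ z = 0 := fun z => by simp [N]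
  obtain ⟨W, hW⟩ := Submodule.exists_isCompl N
  have hsk : ∀ (M : Matrix (Fin m) (Fin m) ℂ), Mᵀ = -M → ∀ x y, x ⬝ᵥ (M *ᵥ y) = - (y ⬝ᵥ (M *ᵥ x)) := by
    intro M hM x y
    rw [Matrix.dotProduct_mulVec, ← Matrix.mulVec_transpose, hM, Matrix.neg_mulVec,
      neg_dotProduct, dotProduct_comm]
  -- forms vanishing on W vanish
  have key : ∀ (M : Matrix (Fin m) (Fin m) ℂ), Mᵀ = -M → (∀ z ∈ N, M *ᵥ z = 0) →
      ∀ x, (∀ y ∈ W, x ⬝ᵥ (M *ᵥ y) = 0) → M *ᵥ x = 0 := by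
    intro M hM hz x hx
    have h1 : ∀ y, y ⬝ᵥ (M *ᵥ x) = 0 := by
      intro y
      have hy : y ∈ N ⊔ W := by rw [hW.sup_eq_top]; trivial
      obtain ⟨n, hn, c, hc, rfl⟩ := Submodule.mem_sup.1 hy
      rw [hsk M hM, Matrix.mulVec_add, dotProduct_add, hz n hn, hx c hc]
      simp
    exact dotProduct_eq_zero _ (fun y => by rw [dotProduct_comm]; exact h1 y)
  have hWN : ∀ x ∈ W, x ∈ N → x = 0 := by
    intro x hx hx'
    have : x ∈ N ⊓ W := ⟨hx', hx⟩
    rw [hW.inf_eq_bot] at this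
    simpa using this
  let f : Matrix (Fin m) (Fin m) ℂ → (W →ₗ[ℂ] Module.Dual ℂ W) := fun M =>
    (Matrix.toLinearMap₂' ℂ M).compl₁₂ W.subtype W.subtype
  have hf : ∀ M (x y : W), f M x y = (x : Fin m → ℂ) ⬝ᵥ (M *ᵥ (y : Fin m → ℂ)) := by
    intro M x y
    simp [f, Matrix.toLinearMap₂'_apply']
  by_cases hinj : Function.Injective (f A)
  · have hnt : Nontrivial W := by
      rw [Submodule.nontrivial_iff_ne_bot]
      rintro rfl
      have hT : N = ⊤ := by simpa using hW.sup_eq_top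
      apply h0
      constructor
      · apply Matrix.ext_of_mulVec_single
        intro i
        have := ((hN (Pi.single i 1)).1 (by rw [hT]; trivial)).1
        simp only [this, Matrix.zero_mulVec]
      · apply Matrix.ext_of_mulVec_single
        intro i
        have := ((hN (Pi.single i 1)).1 (by rw [hT]; trivial)).2
        simp only [this, Matrix.zero_mulVec]
    let e := LinearMap.linearEquivOfInjective (f A) hinj (Subspace.dual_finrank_eq).symm
    obtain ⟨μ, hμ⟩ := Module.End.exists_eigenvalue (e.symm.toLinearMap ∘ₗ f B)
    obtain ⟨x, hx⟩ := hμ.exists_hasEigenvector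
    have h1 : f B x = μ • f A x := by
      have h2 := hx.apply_eq_smul
      have h3 : e.symm (f B x) = μ • x := h2
      rw [LinearEquiv.symm_apply_eq] at h3
      rw [h3, map_smul]
      rfl
    have h2 : (B - μ • A) *ᵥ (x : Fin m → ℂ) = 0 := by
      apply key
      · rw [Matrix.transpose_sub, Matrix.transpose_smul, hA, hB]; simp [sub_eq_add_neg, add_comm]
      · intro z hz
        rw [Matrix.sub_mulVec, Matrix.smul_mulVec, ((hN z).1 hz).1, ((hN z).1 hz).2]; simp
      · intro y hy
        have := congrArg (fun g => g (⟨y, hy⟩ : W)) h1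
        simp only [LinearMap.smul_apply, hf] at this
        rw [Matrix.sub_mulVec, Matrix.smul_mulVec, dotProduct_sub, dotProduct_smul, this, sub_self]
    rw [Matrix.sub_mulVec, Matrix.smul_mulVec, sub_eq_zero] at h2
    refine ⟨x, A *ᵥ x, 1, μ, by simp, h2, ?_, by simp⟩
    intro h3
    apply hx.2
    apply Subtype.ext
    exact hWN x x.2 ((hN _).2 ⟨h3, by rw [h2, h3, smul_zero]⟩)
  · rw [← LinearMap.ker_eq_bot, Submodule.eq_bot_iff] at hinj
    push Not at hinj
    obtain ⟨x, hx, hx0⟩ := hinj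
    have h2 : A *ᵥ (x : Fin m → ℂ) = 0 := by
      apply key A hA (fun z hz => ((hN z).1 hz).1)
      intro y hy
      rw [← hf A x ⟨y, hy⟩, LinearMap.mem_ker.1 hx]; rfl
    refine ⟨x, B *ᵥ x, 0, 1, by simp [h2], by simp, ?_, by simp⟩
    intro h3
    apply hx0
    apply Subtype.ext
    exact hWN x x.2 ((hN _).2 ⟨h2, h3⟩)

lemma aux_rank {K : Type*} [Field K] {m : ℕ} (M M' : Matrix (Fin m) (Fin m) K)
    (hM : Mᵀ = -M) (x y w : Fin m → K) (p : K) (hp : p ≠ 0) (hx : M *ᵥ x = p • w)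
    (hwx : w ⬝ᵥ x = 0) (hwy : w ⬝ᵥ y = 1) (hyy : y ⬝ᵥ (M *ᵥ y) = 0)
    (hM' : ∀ z, M' *ᵥ z = M *ᵥ z + ((M *ᵥ y) ⬝ᵥ z) • w - (w ⬝ᵥ z) • (M *ᵥ y)) :
    M'.rank + 2 ≤ M.rank := by
  have hsk : ∀ x y, x ⬝ᵥ (M *ᵥ y) = - (y ⬝ᵥ (M *ᵥ x)) := by
    intro x y
    rw [Matrix.dotProduct_mulVec, ← Matrix.mulVec_transpose, hM, Matrix.neg_mulVec,
      neg_dotProduct, dotProduct_comm]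
  have hw0 : w ≠ 0 := by rintro rfl; simp at hwy
  have hker : ∀ z, M *ᵥ z = 0 → w ⬝ᵥ z = 0 := by
    intro z hz
    have h1 := hsk x z
    rw [hz, hx, dotProduct_zero, dotProduct_smul, dotProduct_comm z w] at h1
    have : p • (w ⬝ᵥ z) = 0 := by rw [← neg_eq_zero]; exact h1.symm
    simpa [hp] using this
  let L : (Fin m → K) →ₗ[K] K := dotProductBilin K K w
  have hL : ∀ z, L z = w ⬝ᵥ z := fun z => rfl
  have c1 : LinearMap.ker M.mulVecLin < LinearMap.ker M'.mulVecLin ⊓ LinearMap.ker L := by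
    rw [SetLike.lt_iff_le_and_exists]
    constructor
    · intro z hz
      simp only [LinearMap.mem_ker, Matrix.mulVecLin_apply] at hz
      have h1 : (M *ᵥ y) ⬝ᵥ z = 0 := by rw [dotProduct_comm, hsk, hz]; simp
      simp [hL, hM', hz, hker z hz, h1]
    · refine ⟨x, ?_, ?_⟩
      · have h1 : (M *ᵥ y) ⬝ᵥ x = -p := by
          rw [dotProduct_comm, hsk, hx, dotProduct_smul, dotProduct_comm y w, hwy]; simp
        simp [hL, hM', hwx, h1, hx]
      · simp [hx, hp, hw0]
  have c2 : LinearMap.ker M'.mulVecLin ⊓ LinearMap.ker L < LinearMap.ker M'.mulVecLin := by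
    rw [SetLike.lt_iff_le_and_exists]
    refine ⟨inf_le_left, y, ?_, ?_⟩
    · simp [hM', hwy, dotProduct_comm _ y, hyy]
    · simp [hL, hwy]
  have d1 := Submodule.finrank_lt_finrank_of_lt c1
  have d2 := Submodule.finrank_lt_finrank_of_lt c2
  have e1 := LinearMap.finrank_range_add_finrank_ker M.mulVecLin
  have e2 := LinearMap.finrank_range_add_finrank_ker M'.mulVecLin
  unfold Matrix.rank
  omega

lemma aux_main_s15 {m : ℕ} (r : ℕ) : ∀ (P : Matrix (Fin m) (Fin m) (Polynomial ℂ)), Pᵀ = -P →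
    (∀ i j, (P i j).natDegree ≤ 1) → normalRank P ≤ 2 * r →
    ∃ (u : Fin r → Fin m → ℂ) (v : Fin r → Fin m → Polynomial ℂ),
      (∀ i a, (v i a).natDegree ≤ 1) ∧
      P = ∑ i : Fin r, Matrix.of fun a b =>
            Polynomial.C (u i a) * v i b - v i a * Polynomial.C (u i b) := by
  induction r with
  | zero =>
    intro P hP hdeg hrk
    refine ⟨fun _ => 0, fun _ => 0, by simp, ?_⟩
    have h1 : (P.map (algebraMap (Polynomial ℂ) (RatFunc ℂ))).rank = 0 := by
      simpa [normalRank] using hrk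
    rw [Matrix.rank, Submodule.finrank_eq_zero, LinearMap.range_eq_bot] at h1
    replace h1 : P.map (algebraMap (Polynomial ℂ) (RatFunc ℂ)) = 0 := by
      apply Matrix.ext_of_mulVec_single
      intro i
      have h3 := LinearMap.congr_fun h1 (Pi.single i 1)
      rw [Matrix.mulVecLin_apply] at h3
      rw [h3, Matrix.zero_mulVec]; rfl
    ext1 i j
    have h2 := congrFun (congrFun h1 i) j
    simpa using h2
  | succ r ih =>
    intro P hP hdeg hrk
    by_cases hP0 : P = 0
    · exact ⟨fun _ => 0, fun _ => 0, by simp, by ext1 i j; simp [hP0, Matrix.sum_apply]⟩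
    let A : Matrix (Fin m) (Fin m) ℂ := P.map (fun q => q.coeff 0)
    let B : Matrix (Fin m) (Fin m) ℂ := P.map (fun q => q.coeff 1)
    have hPij : ∀ i j, P j i = - P i j := fun i j => congrFun (congrFun hP i) j
    have hAB : ∀ i j, P i j = C (A i j) + C (B i j) * X := by
      intro i j
      rw [add_comm]
      exact Polynomial.eq_X_add_C_of_natDegree_le_one (hdeg i j)
    obtain ⟨x, w, a, b, hax, hbx, hw, hab⟩ := aux_exists A B
      (by ext i j; simp [A, hPij i j]) (by ext i j; simp [B, hPij i j])
      (by rintro ⟨h1, h2⟩; apply hP0; ext1 i j; rw [hAB, h1, h2]; simp)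
    obtain ⟨k, hk⟩ := Function.ne_iff.1 hw
    simp only [Pi.zero_apply] at hk
    let y : Fin m → ℂ := Pi.single k (w k)⁻¹
    have hwy : w ⬝ᵥ y = 1 := by simp [y, hk]
    let p : ℂ[X] := C a + C b * X
    have hp : p ≠ 0 := by
      intro h
      have h1 := congrArg (fun q => q.coeff 0) h
      have h2 := congrArg (fun q => q.coeff 1) h
      simp [p] at h1 h2
      tauto
    have hPx : P *ᵥ (fun i => C (x i)) = p • (fun i => C (w i)) := by
      ext1 i
      have h1 := congrFun hax i
      have h2 := congrFun hbx i
      simp only [Matrix.mulVec, dotProduct, Pi.smul_apply, smul_eq_mul] at h1 h2 ⊢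
      simp only [hAB, add_mul, Finset.sum_add_distrib, p]
      rw [← C_mul (a := a), ← h1, mul_right_comm (C b), ← C_mul (a := b), ← h2, map_sum, map_sum, Finset.sum_mul]
      congr 1
      · exact Finset.sum_congr rfl fun j _ => by rw [C_mul]
      · exact Finset.sum_congr rfl fun j _ => by rw [C_mul]; ring
    have hskew : ∀ z : Fin m → ℂ[X], z ⬝ᵥ (P *ᵥ z) = 0 := by
      intro z
      have h1 : z ⬝ᵥ (P *ᵥ z) = - (z ⬝ᵥ (P *ᵥ z)) := by
        conv_lhs => rw [Matrix.dotProduct_mulVec, ← Matrix.mulVec_transpose, hP, Matrix.neg_mulVec,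
          neg_dotProduct, dotProduct_comm]
      exact self_eq_neg.1 h1
    let q : Fin m → ℂ[X] := P *ᵥ (fun i => C (y i))
    have hq : ∀ i, (q i).natDegree ≤ 1 := by
      intro i
      refine Polynomial.natDegree_sum_le_of_forall_le Finset.univ
        (fun j => P i j * C (y j)) ?_
      intro j _
      exact (natDegree_mul_C_le _ _).trans (hdeg i j)
    let P' : Matrix (Fin m) (Fin m) ℂ[X] := P + Matrix.of fun i j => C (w i) * q j - q i * C (w j)
    have hP' : normalRank P' + 2 ≤ normalRank P := by
      let φ := algebraMap ℂ[X] (RatFunc ℂ)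
      have hφ : Function.Injective φ := IsFractionRing.injective _ _
      have hmv : ∀ z : Fin m → ℂ[X], (P.map φ) *ᵥ (fun i => φ (z i)) = fun i => φ ((P *ᵥ z) i) := by
        intro z; ext1 i; simp [Matrix.mulVec, dotProduct]
      have hdp : ∀ z z' : Fin m → ℂ[X], (fun i => φ (z i)) ⬝ᵥ (fun i => φ (z' i)) = φ (z ⬝ᵥ z') := by
        intro z z'; simp [dotProduct]
      apply aux_rank (P.map φ) (P'.map φ) (by ext1 i j; simp [hPij i j])
        (fun i => φ (C (x i))) (fun i => φ (C (y i))) (fun i => φ (C (w i))) (φ p)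
        (by simpa using (map_ne_zero_iff φ hφ).2 hp)
      · rw [hmv, hPx]; ext1 i; simp
      · rw [hdp]
        have h1 := hskew (fun i => C (x i))
        rw [hPx, dotProduct_smul, smul_eq_mul, dotProduct_comm] at h1
        rw [(mul_eq_zero.1 h1).resolve_left hp, map_zero]
      · rw [hdp]
        have : (fun i => C (w i)) ⬝ᵥ (fun i => C (y i)) = C (w ⬝ᵥ y) := by simp [dotProduct]
        rw [this, hwy]; simp
      · rw [hmv, hdp, hskew, map_zero]
      · intro z
        rw [hmv]
        ext1 i
        simp only [Matrix.mulVec, dotProduct, P', Matrix.map_apply, Matrix.add_apply, Matrix.of_apply,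
          Pi.add_apply, Pi.sub_apply, Pi.smul_apply, smul_eq_mul, map_add, map_sub, map_mul, add_mul,
          sub_mul, Finset.sum_add_distrib, Finset.sum_sub_distrib, Finset.sum_mul]
        rw [add_sub_assoc]
        congr 2
        · exact Finset.sum_congr rfl fun j _ => by simp only [q, Matrix.mulVec, dotProduct]; ring
        · exact Finset.sum_congr rfl fun j _ => by simp only [q, Matrix.mulVec, dotProduct]; ring
    obtain ⟨u, v, hv, huv⟩ := ih P' (by ext1 i j; simp [P', hPij i j]; ring) (by
        intro i j
        refine (natDegree_add_le_of_degree_le (hdeg i j) ((natDegree_sub_le_of_le (p := C (w i) * q j) (q := q i * C (w j)) (m := 1) (n := 1) ?_ ?_).trans (by simp)))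
        · exact (natDegree_C_mul_le _ _).trans (hq j)
        · exact (natDegree_mul_C_le _ _).trans (hq i)) (by omega)
    refine ⟨Fin.cons w u, Fin.cons (-q) v, ?_, ?_⟩
    · intro i
      refine Fin.cases ?_ ?_ i
      · intro a; simpa using hq a
      · intro i a; simpa using hv i a
    · rw [Fin.sum_univ_succ]
      simp only [Fin.cons_zero, Fin.cons_succ]
      rw [← huv]
      ext1 i j
      simp only [P', Matrix.add_apply, Matrix.of_apply, Pi.neg_apply]
      ring

lemma aux_rank_add {K : Type*} [Field K] {m : ℕ} (M N : Matrix (Fin m) (Fin m) K) :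
    (M + N).rank ≤ M.rank + N.rank := by
  unfold Matrix.rank
  rw [Matrix.mulVecLin_add]
  refine (Submodule.finrank_mono ?_).trans (Submodule.finrank_add_le_finrank_add_finrank _ _)
  rintro _ ⟨z, rfl⟩
  exact Submodule.add_mem_sup ⟨z, rfl⟩ ⟨z, rfl⟩

lemma aux_conv {m r : ℕ} (U : Matrix (Fin m) (Fin r) ℂ[X]) (V : Matrix (Fin m) (Fin r) ℂ[X]) :
    normalRank (U * Vᵀ - V * Uᵀ) ≤ 2 * r := by
  unfold normalRank
  have h : (U * Vᵀ - V * Uᵀ).map (algebraMap ℂ[X] (RatFunc ℂ)) =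
      U.map (algebraMap ℂ[X] (RatFunc ℂ)) * (V.map (algebraMap ℂ[X] (RatFunc ℂ)))ᵀ +
      (-V.map (algebraMap ℂ[X] (RatFunc ℂ))) * (U.map (algebraMap ℂ[X] (RatFunc ℂ)))ᵀ := by
    ext1 i j
    simp [Matrix.mul_apply, sub_eq_add_neg]
  rw [h]
  refine (aux_rank_add _ _).trans ?_
  have h1 := (Matrix.rank_mul_le_left (U.map (algebraMap ℂ[X] (RatFunc ℂ)))
    (V.map (algebraMap ℂ[X] (RatFunc ℂ)))ᵀ).trans (Matrix.rank_le_width _)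
  have h2 := (Matrix.rank_mul_le_left (-V.map (algebraMap ℂ[X] (RatFunc ℂ)))
    (U.map (algebraMap ℂ[X] (RatFunc ℂ)))ᵀ).trans (Matrix.rank_le_width _)
  omega

/-- Rank-1 decomposition of skew-symmetric matrix pencils: every m×m skew-symmetric
pencil of normal rank at most `2r` equals `Σᵢ (uᵢ vᵢᵀ − vᵢ uᵢᵀ)` with constant vectors
`uᵢ` and degree-≤1 polynomial vectors `vᵢ`; consequently the set of such pencils
coincides exactly (without taking closures) with the set of pencils `U Vᵀ − V Uᵀ` with
`U` constant and `V` of grade 1. -/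
theorem skew_symmetric_pencil_rank_one_decomposition (m r : ℕ)
    (h2 : 2 ≤ 2 * r) (hrm : 2 * r ≤ m - 1)
    (P : Matrix (Fin m) (Fin m) (Polynomial ℂ)) (hP : Pᵀ = -P)
    (hdeg : ∀ i j, (P i j).natDegree ≤ 1) (hrk : normalRank P ≤ 2 * r) :
    (∃ (u : Fin r → Fin m → ℂ) (v : Fin r → Fin m → Polynomial ℂ),
      (∀ i a, (v i a).natDegree ≤ 1) ∧
      P = ∑ i : Fin r, Matrix.of fun a b =>
            Polynomial.C (u i a) * v i b - v i a * Polynomial.C (u i b)) ∧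
    {Q : Matrix (Fin m) (Fin m) (Polynomial ℂ) |
        Qᵀ = -Q ∧ (∀ i j, (Q i j).natDegree ≤ 1) ∧ normalRank Q ≤ 2 * r} =
      {Q : Matrix (Fin m) (Fin m) (Polynomial ℂ) |
        ∃ (U : Matrix (Fin m) (Fin r) ℂ) (V : Matrix (Fin m) (Fin r) (Polynomial ℂ)),
          (∀ i j, (V i j).natDegree ≤ 1) ∧
          Q = U.map Polynomial.C * Vᵀ - V * (U.map Polynomial.C)ᵀ} := by
  refine ⟨aux_main_s15 r P hP hdeg hrk, ?_⟩
  ext Q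
  simp only [Set.mem_ofPred_eq]
  constructor
  · rintro ⟨h1, h2, h3⟩
    obtain ⟨u, v, hv, huv⟩ := aux_main_s15 r Q h1 h2 h3
    refine ⟨Matrix.of fun a i => u i a, Matrix.of fun a i => v i a, fun i j => hv j i, ?_⟩
    rw [huv]
    ext1 a b
    simp [Matrix.sum_apply, Matrix.mul_apply]
  · rintro ⟨U, V, hV, rfl⟩
    refine ⟨?_, ?_, aux_conv _ _⟩
    · simp
    · intro i j
      rw [Matrix.sub_apply]
      refine (natDegree_sub_le_of_le (m := 1) (n := 1) ?_ ?_).trans (by simp)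
      · refine Polynomial.natDegree_sum_le_of_forall_le Finset.univ
          (fun k => C (U i k) * V j k) ?_
        intro k _
        exact (natDegree_C_mul_le _ _).trans (hV j k)
      · refine Polynomial.natDegree_sum_le_of_forall_le Finset.univ
          (fun k => V i k * C (U j k)) ?_
        intro k _
        exact (natDegree_mul_C_le _ _).trans (hV i k)
end

section
/- Let r be a positive integer, let s₁, …, s_r be positive real numbers, let S₁ ∈ Matrix (Fin r) (Fin r) ℂ be the diagonal matrix with diagonal entries s₁, …, s_r, and let E ∈ Matrix (Fin r) (Fin r) ℂ be skew-symmetric (Eᵀ = −E). Define X₁ ∈ Matrix (Fin r) (Fin r) ℂ by (X₁)_{j,i} = E_{i,j}/(sᵢ + sⱼ) for all i, j. Then X₁ is skew-symmetric and S₁ X₁ᵀ − X₁ S₁ᵀ = E. Moreover, for any E₁₂ ∈ Matrix (Fin r) (Fin k) ℂ, the matrix X₂ := E₁₂ᵀ S₁⁻¹ ∈ Matrix (Fin k) (Fin r) ℂ satisfies S₁ X₂ᵀ = E₁₂. Consequently, the skew-symmetric matrix equation arising in each alternating step of the pencil algorithm is exactly solvable in these two blocks. -/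
open Matrix

/-- The skew-symmetric matrix equation `S₁ X₁ᵀ − X₁ S₁ᵀ = E` and the equation
`S₁ X₂ᵀ = E₁₂` arising in each alternating step of the pencil algorithm are exactly
solvable: `X₁` given by `(X₁)_{j,i} = E_{i,j}/(sᵢ + sⱼ)` is skew-symmetric and solves the
first one, and `X₂ := E₁₂ᵀ S₁⁻¹` solves the second one. -/
theorem pencil_alternating_step_exact_solution (r : ℕ) (hr : 0 < r)
    (s : Fin r → ℝ) (hs : ∀ i, 0 < s i)
    (E : Matrix (Fin r) (Fin r) ℂ) (hE : Eᵀ = -E)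
    (S1 : Matrix (Fin r) (Fin r) ℂ) (hS1 : S1 = Matrix.diagonal fun i => (s i : ℂ))
    (X1 : Matrix (Fin r) (Fin r) ℂ)
    (hX1 : X1 = Matrix.of fun j i => E i j / ((s i : ℂ) + (s j : ℂ))) :
    X1ᵀ = -X1 ∧
    S1 * X1ᵀ - X1 * S1ᵀ = E ∧
    ∀ (k : ℕ) (E12 : Matrix (Fin r) (Fin k) ℂ), S1 * (E12ᵀ * S1⁻¹)ᵀ = E12 := by
  have hskew : ∀ i j, E j i = -E i j := fun i j => by
    have h := congrFun (congrFun hE i) j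
    simpa using h
  have hne : ∀ i j, (s i : ℂ) + (s j : ℂ) ≠ 0 := fun i j => by
    have h : s i + s j ≠ 0 := (add_pos (hs i) (hs j)).ne'
    exact_mod_cast h
  have hXT : X1ᵀ = -X1 := by
    subst hX1
    ext i j
    simp only [Matrix.transpose_apply, Matrix.of_apply, Matrix.neg_apply]
    rw [hskew i j, add_comm (s j : ℂ), neg_div, neg_neg]
  refine ⟨hXT, ?_, ?_⟩
  · subst hX1 hS1
    ext i j
    rw [Matrix.diagonal_transpose, Matrix.sub_apply, Matrix.diagonal_mul, Matrix.mul_diagonal]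
    simp only [Matrix.transpose_apply, Matrix.of_apply]
    rw [hskew i j, add_comm (s j : ℂ)]
    have := hne i j
    field_simp
    ring
  · intro k E12
    have hdet : IsUnit S1.det := by
      rw [hS1, Matrix.det_diagonal, isUnit_iff_ne_zero, Finset.prod_ne_zero_iff]
      intro i _
      exact_mod_cast (hs i).ne'
    have hST : S1ᵀ = S1 := by rw [hS1, Matrix.diagonal_transpose]
    rw [Matrix.transpose_mul, Matrix.transpose_transpose, Matrix.transpose_nonsing_inv, hST,
      Matrix.mul_nonsing_inv_cancel_left _ _ hdet]
end
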